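/- arXiv:2402.02879 — 10 statements merged into one kernel-verified Lean document; each statement's English description precedes it below -/
import Mathlib

section
/- Let A be a Noetherian commutative ring and I ⊆ A an ideal. Let P be a bounded-above cochain complex of A-modules such that every term of P is a flat A-module and P is acyclic (all cohomology modules of P vanish). Then the cochain complex obtained by applying the I-adic completion functor M ↦ Λ_I M degreewise to P is again acyclic. -/
open CategoryTheory

/-- The `I`-adic completion functor on the category of `A`-modules. Applied degreewise
(via `Functor.mapHomologicalComplex`) it computes the degreewise `I`-adic completion of a
cochain complex of `A`-modules. -/
noncomputable def adicCompletionFunctor (A : Type) [CommRing A] (I : Ideal A) :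
    ModuleCat A ⥤ ModuleCat A where
  obj M := ModuleCat.of A (AdicCompletion I M)
  map f := ModuleCat.ofHom ((AdicCompletion.map I f.hom).restrictScalars A)
  map_id M := ModuleCat.hom_ext
    (congrArg (LinearMap.restrictScalars A) (AdicCompletion.map_id I M))
  map_comp f g := ModuleCat.hom_ext
    (congrArg (LinearMap.restrictScalars A) (AdicCompletion.map_comp I f.hom g.hom).symm)

noncomputable instance (A : Type) [CommRing A] (I : Ideal A) :
    (adicCompletionFunctor A I).PreservesZeroMorphisms where
  map_zero M N := ModuleCat.hom_ext
    (congrArg (LinearMap.restrictScalars A) (AdicCompletion.map_zero (M := M) (N := N) I))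

/-! Since `P` is bounded above, descending induction shows that all its modules of coboundaries are
flat. As `Bⁱ⁺¹` is flat, the short exact sequence `0 → Bⁱ → Pⁱ → Bⁱ⁺¹ → 0` stays exact modulo every
power of `I`. Since `Bⁱ/IⁿBⁱ → Pⁱ/IⁿPⁱ` is injective, preimages under it are unique, hence
compatible for varying `n`, so exactness passes to the limit. Splicing the completed sequences
proves the claim. -/

open Function LinearMap

section ShortExact

variable {R M N P : Type*} [CommRing R] [AddCommGroup M] [Module R M] [AddCommGroup N] [Module R N]
  [AddCommGroup P] [Module R P] {f : M →ₗ[R] N} {g : N →ₗ[R] P}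

theorem exact_subtype_range_rangeRestrict (hfg : Exact f g) :
    Exact (range f).subtype g.rangeRestrict := by
  rw [LinearMap.exact_iff, ker_rangeRestrict, Submodule.range_subtype, hfg.linearMap_ker_eq]

theorem flat_of_exact_of_flat_of_flat [Module.Flat R N] [Module.Flat R P] (hf : Injective f)
    (hfg : Exact f g) (hg : Surjective g) : Module.Flat R M := by
  rw [Module.Flat.iff_rTensor_preserves_injective_linearMap]
  intro X Y _ _ _ _ u hu
  have hfX : Injective (f.lTensor X) := lTensor_injective_of_exact_of_flat g hg f hf hfg X
  have huN : Injective (u.rTensor N) := Module.Flat.rTensor_preserves_injective_linearMap u hu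
  have hcomm : f.lTensor Y ∘ₗ u.rTensor M = u.rTensor N ∘ₗ f.lTensor X := by
    rw [lTensor_comp_rTensor, rTensor_comp_lTensor]
  have hinj : Injective (f.lTensor Y ∘ₗ u.rTensor M) := hcomm ▸ huN.comp hfX
  exact Injective.of_comp hinj

theorem reduceModIdeal_injective_of_exact_of_flat [Module.Flat R P] (J : Ideal R)
    (hf : Injective f) (hfg : Exact f g) (hg : Surjective g) :
    Injective (f.reduceModIdeal J) := by
  refine (injective_iff_map_eq_zero _).2 fun x hx ↦ ?_
  obtain ⟨m, rfl⟩ := Submodule.Quotient.mk_surjective _ x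
  have hfm : f m ∈ (J • ⊤ : Submodule R N) := (Submodule.Quotient.mk_eq_zero _).1 hx
  have hmem : f m ∈ J • ker g :=
    ker_inf_smul_top_eq_smul_of_flat J g hg ▸ ⟨hfg.apply_apply_eq_zero m, hfm⟩
  rw [hfg.linearMap_ker_eq, ← Submodule.map_top, ← Submodule.map_smul''] at hmem
  obtain ⟨m', hm', hfm'⟩ := hmem
  exact (Submodule.Quotient.mk_eq_zero _).2 (hf hfm' ▸ hm')

theorem reduceModIdeal_exact (J : Ideal R) (hfg : Exact f g) (hg : Surjective g) :
    Exact (f.reduceModIdeal J) (g.reduceModIdeal J) := by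
  suffices hle : range g ⊓ J • ⊤ ≤ (J • ⊤ : Submodule R N).map g from
    (hfg.exact_mapQ_iff (Submodule.smul_top_le_comap_smul_top J f)
      (Submodule.smul_top_le_comap_smul_top J g)).2 hle
  rw [Submodule.map_smul'', Submodule.map_top, range_eq_top.2 hg]
  exact inf_le_right

end ShortExact

section AdicCompletion

variable {R M N P Q : Type*} [CommRing R] (I : Ideal R) [AddCommGroup M] [Module R M]
  [AddCommGroup N] [Module R N] [AddCommGroup P] [Module R P] [AddCommGroup Q] [Module R Q]
  {f : M →ₗ[R] N} {g : N →ₗ[R] P} {h : P →ₗ[R] Q}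

theorem adicCompletion_map_injective_of_reduceModIdeal
    (hf : ∀ n, Injective (f.reduceModIdeal (I ^ n))) : Injective (AdicCompletion.map I f) :=
  fun _ _ hxy ↦ AdicCompletion.ext fun n ↦ hf n congr(($hxy).val n)

theorem adicCompletion_map_exact_of_reduceModIdeal
    (hf : ∀ n, Injective (f.reduceModIdeal (I ^ n)))
    (hfg : ∀ n, Exact (f.reduceModIdeal (I ^ n)) (g.reduceModIdeal (I ^ n))) :
    Exact (AdicCompletion.map I f) (AdicCompletion.map I g) := by
  intro x
  constructor
  · intro hx
    have hpre (n : ℕ) : ∃ y, f.reduceModIdeal (I ^ n) y = x.val n :=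
      (hfg n _).1 congr(($hx).val n)
    choose y hy using hpre
    have hcompat {m n : ℕ} (hmn : m ≤ n) : AdicCompletion.transitionMap I M hmn (y n) = y m := by
      apply hf m
      calc f.reduceModIdeal (I ^ m) (AdicCompletion.transitionMap I M hmn (y n))
          = AdicCompletion.transitionMap I N hmn (f.reduceModIdeal (I ^ n) (y n)) :=
            (LinearMap.congr_fun
              (AdicCompletion.transitionMap_comp_reduceModIdeal I f hmn) (y n)).symm
        _ = f.reduceModIdeal (I ^ m) (y m) := by rw [hy, hy, x.property hmn]
    exact ⟨⟨y, hcompat⟩, AdicCompletion.ext hy⟩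
  · rintro ⟨y, rfl⟩
    exact AdicCompletion.ext fun n ↦ (hfg n).apply_apply_eq_zero (y.val n)

theorem adicCompletion_map_injective_of_exact_of_flat [Module.Flat R P] (hf : Injective f)
    (hfg : Exact f g) (hg : Surjective g) : Injective (AdicCompletion.map I f) :=
  adicCompletion_map_injective_of_reduceModIdeal I fun n ↦
    reduceModIdeal_injective_of_exact_of_flat (I ^ n) hf hfg hg

theorem adicCompletion_map_exact_of_exact_of_flat [Module.Flat R P] (hf : Injective f)
    (hfg : Exact f g) (hg : Surjective g) :
    Exact (AdicCompletion.map I f) (AdicCompletion.map I g) :=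
  adicCompletion_map_exact_of_reduceModIdeal I
    (fun n ↦ reduceModIdeal_injective_of_exact_of_flat (I ^ n) hf hfg hg)
    (fun n ↦ reduceModIdeal_exact (I ^ n) hfg hg)

theorem adicCompletion_map_exact_of_flat_range [Module.Flat R (range g)] [Module.Flat R (range h)]
    (hfg : Exact f g) (hgh : Exact g h) :
    Exact (AdicCompletion.map I f) (AdicCompletion.map I g) := by
  have hf_surj : Surjective (AdicCompletion.map I f.rangeRestrict) :=
    AdicCompletion.map_surjective I f.surjective_rangeRestrict
  have hg_inj : Injective (AdicCompletion.map I (range g).subtype) :=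
    adicCompletion_map_injective_of_exact_of_flat I (range g).subtype_injective
      (exact_subtype_range_rangeRestrict hgh) h.surjective_rangeRestrict
  have hexact : Exact (AdicCompletion.map I (range f).subtype)
      (AdicCompletion.map I g.rangeRestrict) :=
    adicCompletion_map_exact_of_exact_of_flat I (range f).subtype_injective
      (exact_subtype_range_rangeRestrict hfg) g.surjective_rangeRestrict
  rw [← subtype_comp_codRestrict f (range f) (mem_range_self f),
    ← subtype_comp_codRestrict g (range g) (mem_range_self g),
    ← AdicCompletion.map_comp, ← AdicCompletion.map_comp]
  exact hf_surj.comp_exact_iff_exact.2 (hg_inj.comp_exact_iff_exact.2 hexact)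

end AdicCompletion

section CochainComplex

variable {R : Type*} [CommRing R] (P : CochainComplex (ModuleCat R) ℤ)

theorem cochainComplex_exactAt_iff_exact {i j k : ℤ} (hij : i + 1 = j) (hjk : j + 1 = k) :
    P.ExactAt j ↔ Exact (P.d i j).hom (P.d j k).hom := by
  rw [P.exactAt_iff' i j k ((ComplexShape.up ℤ).prev_eq' hij) ((ComplexShape.up ℤ).next_eq' hjk)]
  exact ShortComplex.ShortExact.moduleCat_exact_iff_function_exact _

theorem flat_range_d_of_acyclic (n : ℤ) [P.IsStrictlyLE n] (hflat : ∀ i, Module.Flat R (P.X i))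
    (hP : P.Acyclic) (i : ℤ) : Module.Flat R (range (P.d i (i + 1)).hom) := by
  have hflat_ge (k : ℤ) (hk : n ≤ k) : Module.Flat R (range (P.d k (k + 1)).hom) := by
    have := ModuleCat.subsingleton_of_isZero (P.isZero_of_isStrictlyLE n (k + 1))
    infer_instance
  obtain hi | hi := le_total n i
  · exact hflat_ge i hi
  induction i, hi using Int.leInductionDown with
  | base => exact hflat_ge n le_rfl
  | pred i _ ih =>
    have hflat_next : Module.Flat R (range (P.d (i - 1 + 1) (i - 1 + 1 + 1)).hom) := by
      rwa [sub_add_cancel]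
    have hexact := (cochainComplex_exactAt_iff_exact P rfl rfl).1 (hP (i - 1 + 1))
    exact flat_of_exact_of_flat_of_flat (Submodule.subtype_injective _)
      (exact_subtype_range_rangeRestrict hexact) (surjective_rangeRestrict _)

end CochainComplex

theorem stmt0_general (A : Type) [CommRing A] (I : Ideal A)
    (P : CochainComplex (ModuleCat A) ℤ)
    (hbdd : ∃ n : ℤ, ∀ i : ℤ, n < i → Limits.IsZero (P.X i))
    (hflat : ∀ i : ℤ, Module.Flat A (P.X i))
    (hacyclic : ∀ i : ℤ, P.ExactAt i) :
    ∀ i : ℤ, (((adicCompletionFunctor A I).mapHomologicalComplex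
      (ComplexShape.up ℤ)).obj P).ExactAt i := by
  intro j
  obtain ⟨n, hn⟩ := hbdd
  have : P.IsStrictlyLE n := (P.isStrictlyLE_iff n).2 hn
  have hrange := flat_range_d_of_acyclic P n hflat hacyclic
  obtain ⟨i, rfl⟩ : ∃ i, j = i + 1 := ⟨j - 1, (sub_add_cancel j 1).symm⟩
  have hexact (k : ℤ) : Exact (P.d k (k + 1)).hom (P.d (k + 1) (k + 1 + 1)).hom :=
    (cochainComplex_exactAt_iff_exact P rfl rfl).1 (hacyclic (k + 1))
  exact (cochainComplex_exactAt_iff_exact _ rfl rfl).2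
    (adicCompletion_map_exact_of_flat_range I (hexact i) (hexact (i + 1)))

/-- If `P` is a bounded-above acyclic cochain complex of flat modules over a noetherian
commutative ring `A`, then the degreewise `I`-adic completion of `P` is again acyclic. -/
theorem stmt0 (A : Type) [CommRing A] [IsNoetherianRing A] (I : Ideal A)
    (P : CochainComplex (ModuleCat A) ℤ)
    (hbdd : ∃ n : ℤ, ∀ i : ℤ, n < i → Limits.IsZero (P.X i))
    (hflat : ∀ i : ℤ, Module.Flat A (P.X i))
    (hacyclic : ∀ i : ℤ, P.ExactAt i) :
    ∀ i : ℤ, (((adicCompletionFunctor A I).mapHomologicalComplex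
      (ComplexShape.up ℤ)).obj P).ExactAt i :=
  stmt0_general A I P hbdd hflat hacyclic
end

section
/- Let A be a Noetherian commutative ring with an ideal I ⊆ A, let B be a Noetherian commutative A-algebra and let J ⊆ B be an ideal with I·B ⊆ J. For every A-module M, the map M ⊗_A B → (Λ_I M) ⊗_A B induced by the canonical completion map M → Λ_I M becomes an isomorphism after applying the J-adic completion functor: Λ_J(M ⊗_A B) ≅ Λ_J((Λ_I M) ⊗_A B). -/
open TensorProduct

/-!
By right exactness of the tensor product, a surjection `f : M → N` with `ker f ≤ I • ⊤` becomes an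
isomorphism modulo `J` after base change to `B`, as soon as `I B ≤ J`. For the ideals `Iⁿ` and `Jⁿ`
this applies to `M → M ⧸ Iⁿ M` and, when `I` is finitely generated, to the evaluation
`Λ_I M → M ⧸ Iⁿ M`, whose kernel is then `Iⁿ Λ_I M`. The former is the composite of `M → Λ_I M`
with the latter, so by two-out-of-three the base change of `M → Λ_I M` is an isomorphism modulo
every `Jⁿ`, hence on `J`-adic completions.
-/

section ReduceModIdeal

variable {R : Type*} [CommRing R] (I : Ideal R)
variable {M N P : Type*} [AddCommGroup M] [AddCommGroup N] [AddCommGroup P]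
variable [Module R M] [Module R N] [Module R P]

theorem coe_reduceModIdeal_comp (g : N →ₗ[R] P) (f : M →ₗ[R] N) :
    ⇑((g ∘ₗ f).reduceModIdeal I) = g.reduceModIdeal I ∘ f.reduceModIdeal I :=
  funext ((Submodule.mkQ_surjective _).forall.2 fun _ ↦ rfl)

theorem reduceModIdeal_bijective_of_surjective {f : M →ₗ[R] N} (hf : Function.Surjective f)
    (hker : f.ker ≤ I • ⊤) : Function.Bijective (f.reduceModIdeal I) := by
  constructor
  · rw [injective_iff_map_eq_zero]
    refine (Submodule.mkQ_surjective _).forall.2 fun x hx ↦ ?_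
    rw [Submodule.mkQ_apply, LinearMap.reduceModIdeal_apply, Submodule.Quotient.mk_eq_zero,
      ← Submodule.mem_comap, Submodule.comap_smul_top_of_surjective I f hf,
      sup_eq_left.2 hker] at hx
    exact (Submodule.Quotient.mk_eq_zero _).2 hx
  · refine (Submodule.mkQ_surjective _).forall.2 fun y ↦ ?_
    obtain ⟨x, rfl⟩ := hf y
    exact ⟨Submodule.Quotient.mk x, f.reduceModIdeal_apply I x⟩

theorem adicCompletion_map_bijective {f : M →ₗ[R] N}
    (hf : ∀ n, Function.Bijective (f.reduceModIdeal (I ^ n))) :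
    Function.Bijective (AdicCompletion.map I f) := by
  refine ⟨fun x y hxy ↦ AdicCompletion.ext fun n ↦ (hf n).injective ?_, fun z ↦ ?_⟩
  · exact congrArg (fun t ↦ t.val n) hxy
  · choose x hx using fun n ↦ (hf n).surjective (z.val n)
    refine ⟨⟨x, fun {m n} hmn ↦ (hf m).injective ?_⟩, AdicCompletion.ext hx⟩
    calc f.reduceModIdeal (I ^ m) (AdicCompletion.transitionMap I M hmn (x n))
        = AdicCompletion.transitionMap I N hmn (f.reduceModIdeal (I ^ n) (x n)) :=
          (LinearMap.congr_fun
            (AdicCompletion.transitionMap_comp_reduceModIdeal I f hmn) (x n)).symm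
      _ = AdicCompletion.transitionMap I N hmn (z.val n) := by rw [hx n]
      _ = z.val m := z.property hmn
      _ = f.reduceModIdeal (I ^ m) (x m) := (hx m).symm

end ReduceModIdeal

section BaseChange

theorem baseChange_ideal_smul {A : Type*} [CommSemiring A] (B : Type*) [CommSemiring B]
    [Algebra A B] {M : Type*} [AddCommMonoid M] [Module A M] (I : Ideal A) (L : Submodule A M) :
    (I • L).baseChange B = I.map (algebraMap A B) • L.baseChange B := by
  refine le_antisymm ?_ ?_
  · rw [Submodule.baseChange_eq_span B (I • L), Submodule.span_le]
    change (I • L).map (TensorProduct.mk A B M 1) ≤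
      (I.map (algebraMap A B) • L.baseChange B).restrictScalars A
    refine Submodule.map_le_iff_le_comap.2 (Submodule.smul_le.2 fun a ha x hx ↦ ?_)
    rw [Submodule.mem_comap, map_smul, ← algebraMap_smul B a, Submodule.restrictScalars_mem]
    exact Submodule.smul_mem_smul (Ideal.mem_map_of_mem _ ha)
      (Submodule.tmul_mem_baseChange_of_mem 1 hx)
  · rw [Submodule.baseChange_eq_span B L, Ideal.map, Submodule.span_smul_span, Submodule.span_le]
    rintro _ ⟨_, ⟨a, ha, rfl⟩, _, ⟨x, hx, rfl⟩, rfl⟩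
    dsimp only
    rw [algebraMap_smul, ← map_smul]
    exact Submodule.tmul_mem_baseChange_of_mem 1 (Submodule.smul_mem_smul ha hx)

variable {A : Type*} [CommRing A] {M N : Type*} [AddCommGroup M] [AddCommGroup N]
variable [Module A M] [Module A N]

theorem ker_baseChange_of_surjective (B : Type*) [Ring B] [Algebra A B] {f : M →ₗ[A] N}
    (hf : Function.Surjective f) : (f.baseChange B).ker = f.ker.baseChange B :=
  Submodule.ext (lTensor_exact B f.exact_subtype_ker_map hf)

variable {B : Type*} [CommRing B] [Algebra A B] {I : Ideal A} {J : Ideal B}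

theorem reduceModIdeal_baseChange_bijective_of_surjective
    (hIJ : I.map (algebraMap A B) ≤ J) {f : M →ₗ[A] N} (hf : Function.Surjective f)
    (hker : f.ker ≤ I • ⊤) : Function.Bijective ((f.baseChange B).reduceModIdeal J) := by
  refine reduceModIdeal_bijective_of_surjective J (f.baseChange_surjective B hf) ?_
  calc (f.baseChange B).ker = f.ker.baseChange B := ker_baseChange_of_surjective B hf
    _ ≤ (I • ⊤ : Submodule A M).baseChange B := Submodule.baseChange_mono B hker
    _ = I.map (algebraMap A B) • ⊤ := by rw [baseChange_ideal_smul, Submodule.baseChange_top]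
    _ ≤ J • ⊤ := Submodule.smul_mono_left hIJ

theorem reduceModIdeal_pow_baseChange_of_bijective (hI : I.FG)
    (hIJ : I.map (algebraMap A B) ≤ J) (n : ℕ) :
    Function.Bijective (((AdicCompletion.of I M).baseChange B).reduceModIdeal (J ^ n)) := by
  have hpow : (I ^ n).map (algebraMap A B) ≤ J ^ n := by
    rw [Ideal.map_pow]
    exact Ideal.pow_right_mono hIJ n
  have heval : Function.Bijective
      (((AdicCompletion.eval I M n).baseChange B).reduceModIdeal (J ^ n)) :=
    reduceModIdeal_baseChange_bijective_of_surjective hpow (AdicCompletion.eval_surjective I M n)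
      (AdicCompletion.pow_smul_top_eq_ker_eval hI).ge
  rw [← heval.of_comp_iff', ← coe_reduceModIdeal_comp, ← LinearMap.baseChange_comp,
    AdicCompletion.eval_comp_of]
  exact reduceModIdeal_baseChange_bijective_of_surjective hpow (Submodule.mkQ_surjective _)
    (Submodule.ker_mkQ _).le

end BaseChange

theorem stmt2_general {A : Type*} [CommRing A] {I : Ideal A} (hI : I.FG)
    {B : Type*} [CommRing B] [Algebra A B] {J : Ideal B} (hIJ : I.map (algebraMap A B) ≤ J)
    (M : Type*) [AddCommGroup M] [Module A M] :
    Function.Bijective (AdicCompletion.map J ((AdicCompletion.of I M).baseChange B)) :=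
  adicCompletion_map_bijective J (reduceModIdeal_pow_baseChange_of_bijective hI hIJ)

/-- Let `A` be noetherian with ideal `I`, `B` a noetherian `A`-algebra and `J ⊆ B` an ideal
containing `I·B` (continuity of `A → B` for the adic topologies). For every `A`-module `M`, the
base change to `B` of the canonical completion map `M → Λ_I M` becomes an isomorphism after
applying the `J`-adic completion functor. -/
theorem stmt2 (A : Type) [CommRing A] [IsNoetherianRing A] (I : Ideal A)
    (B : Type) [CommRing B] [IsNoetherianRing B] [Algebra A B] (J : Ideal B)
    (hIJ : I.map (algebraMap A B) ≤ J)
    (M : Type) [AddCommGroup M] [Module A M] :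
    Function.Bijective
      (AdicCompletion.map J ((AdicCompletion.of I M).baseChange B)) :=
  stmt2_general I.fg_of_isNoetherianRing hIJ M
end

section
/- Let A be a Noetherian commutative ring, I ⊆ A an ideal, and Â = Λ_I A the I-adic completion of A, viewed as an A-algebra via the canonical map A → Â. Then the module of Kähler differentials satisfies Ω_{Â/A} = (I·Â)·Ω_{Â/A}; consequently the (I·Â)-adic completion of Ω_{Â/A} is the zero module. -/
/-
Write `B = Â`. Since `I` is finitely generated, `A → B ⧸ I B` is surjective, that is, every
element of `B` is `a + y` with `a` in the image of `A` and `y ∈ I B`. The universal derivation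
kills `a`, and being `A`-linear it sends `I B` into `I Ω[B⁄A]`; as its values generate `Ω[B⁄A]`,
we get `Ω[B⁄A] = I Ω[B⁄A]`. Iterating, all the quotients `Ω[B⁄A] ⧸ Iⁿ Ω[B⁄A]` vanish, hence so
does their limit.
-/

theorem subsingleton_adicCompletion_of_smul_top_eq_top {R M : Type*} [CommRing R]
    [AddCommGroup M] [Module R M] {J : Ideal R} (h : J • (⊤ : Submodule R M) = ⊤) :
    Subsingleton (AdicCompletion J M) where
  allEq x y := by
    have pow_smul_top (n : ℕ) : J ^ n • (⊤ : Submodule R M) = ⊤ :=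
      pow_mem (S := MulAction.stabilizerSubmonoid (Ideal R) (⊤ : Submodule R M)) h n
    refine AdicCompletion.ext fun n ↦ ?_
    have : Subsingleton (M ⧸ (J ^ n • ⊤ : Submodule R M)) :=
      Submodule.Quotient.subsingleton_iff.mpr (pow_smul_top n)
    exact Subsingleton.elim _ _

theorem apply_mem_map_smul_top_of_mem_map {A B M : Type*} [CommSemiring A] [CommSemiring B]
    [Algebra A B] [AddCommMonoid M] [Module A M] [Module B M] [IsScalarTower A B M] {I : Ideal A}
    (f : B →ₗ[A] M) {b : B} (hb : b ∈ I.map (algebraMap A B)) :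
    f b ∈ I.map (algebraMap A B) • (⊤ : Submodule B M) := by
  rw [← Submodule.restrictScalars_mem A, ← Ideal.smul_top_eq_map] at hb
  rw [← Submodule.restrictScalars_mem A, Ideal.smul_restrictScalars]
  exact Submodule.smul_top_le_comap_smul_top I f hb

section

open scoped KaehlerDifferential

variable {A B : Type*} [CommRing A] [CommRing B] [Algebra A B] {I : Ideal A}

theorem map_smul_top_kaehlerDifferential_eq_top
    (h : Function.Surjective (algebraMap A (B ⧸ I.map (algebraMap A B)))) :
    I.map (algebraMap A B) • (⊤ : Submodule B Ω[B⁄A]) = ⊤ := by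
  rw [eq_top_iff, ← KaehlerDifferential.span_range_derivation A B, Submodule.span_le,
    KaehlerDifferential.span_range_derivation]
  rintro _ ⟨b, rfl⟩
  obtain ⟨a, ha⟩ := h (Ideal.Quotient.mk _ b)
  have sub_mem : b - algebraMap A B a ∈ I.map (algebraMap A B) := Ideal.Quotient.eq.mp ha.symm
  have D_sub : KaehlerDifferential.D A B (b - algebraMap A B a) = KaehlerDifferential.D A B b := by
    rw [map_sub, Derivation.map_algebraMap, sub_zero]
  rw [← D_sub]
  exact apply_mem_map_smul_top_of_mem_map (KaehlerDifferential.D A B).toLinearMap sub_mem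

theorem surjective_algebraMap_adicCompletion_quotient_map (hI : I.FG) :
    Function.Surjective
      (algebraMap A (AdicCompletion I A ⧸ I.map (algebraMap A (AdicCompletion I A)))) := by
  intro q
  obtain ⟨x, rfl⟩ := Ideal.Quotient.mk_surjective q
  obtain ⟨a, ha⟩ := Ideal.Quotient.mk_surjective (AdicCompletion.evalOneₐ I x)
  refine ⟨a, Ideal.Quotient.eq.mpr ?_⟩
  rw [← AdicCompletion.ker_evalOneₐ_eq_map I hI, RingHom.mem_ker, map_sub, sub_eq_zero]
  exact ha

theorem stmt3_general (hI : I.FG) :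
    I.map (algebraMap A (AdicCompletion I A)) •
        (⊤ : Submodule (AdicCompletion I A) Ω[AdicCompletion I A⁄A]) = ⊤ ∧
      Subsingleton (AdicCompletion (I.map (algebraMap A (AdicCompletion I A)))
        Ω[AdicCompletion I A⁄A]) :=
  have smul_top_eq_top := map_smul_top_kaehlerDifferential_eq_top
    (surjective_algebraMap_adicCompletion_quotient_map hI)
  ⟨smul_top_eq_top, subsingleton_adicCompletion_of_smul_top_eq_top smul_top_eq_top⟩

end

/-- For a noetherian commutative ring `A` with ideal `I` and `Â = Λ_I A` the `I`-adic completion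
(an `A`-algebra via the canonical map), the Kähler differentials satisfy
`Ω_{Â/A} = (I·Â)·Ω_{Â/A}`; consequently the `(I·Â)`-adic completion of `Ω_{Â/A}` vanishes. -/
theorem stmt3 (A : Type) [CommRing A] [IsNoetherianRing A] (I : Ideal A) :
    (I.map (algebraMap A (AdicCompletion I A))) •
        (⊤ : Submodule (AdicCompletion I A)
          (KaehlerDifferential A (AdicCompletion I A))) = ⊤ ∧
      Subsingleton (AdicCompletion (I.map (algebraMap A (AdicCompletion I A)))
        (KaehlerDifferential A (AdicCompletion I A))) :=
  stmt3_general (IsNoetherian.noetherian I)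
end

section
/- Let p : B → B' be a surjective homomorphism of commutative rings whose kernel M satisfies M² = 0 and is finitely generated as an ideal of B. Assume that B' is Noetherian and that B' is I'-adically complete (complete and separated) for an ideal I' ⊆ B'. Then B is Noetherian, and B is I-adically complete for the ideal I := p⁻¹(I'). -/
/-!
Let `J` be the kernel of `p` and `I = p⁻¹(I')`. Every prime of `B` contains the nil ideal `J`, so it
is finitely generated because `J` and its image in `B'` are; by Cohen's theorem `B` is Noetherian.

Completion at `I` is then exact on finite `B`-modules, so an extension of precomplete modules is
precomplete. The finitely generated nil ideal `J` is nilpotent, so the filtration of `B` by the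
powers of `J` is finite; its graded pieces are finite modules over the complete ring `B ⧸ J ≅ B'`,
hence precomplete, and therefore so is `B`.
Separatedness is Krull's intersection theorem: `I` lies in the Jacobson radical of `B` because `I'`
lies in that of `B'`.
-/

universe u v

section Ring

variable {B : Type u} {B' : Type v} [CommRing B] [CommRing B'] {p : B →+* B'}

theorem isNoetherianRing_of_surjective_of_ker_le_nilradical [IsNoetherianRing B']
    (hsurj : Function.Surjective p) (hfg : (RingHom.ker p).FG)
    (hnil : RingHom.ker p ≤ nilradical B) : IsNoetherianRing B := by
  refine .of_prime fun P _ ↦ Ideal.fg_of_fg_map_of_fg_inf_ker_of_surjective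
    (IsNoetherian.noetherian (P.map p)) ?_ hsurj
  rwa [inf_eq_right.2 (hnil.trans (nilradical_le_prime P))]

theorem comap_jacobson_bot_le_of_ker_le (hsurj : Function.Surjective p)
    (hker : RingHom.ker p ≤ Ideal.jacobson ⊥) :
    (Ideal.jacobson ⊥ : Ideal B').comap p ≤ Ideal.jacobson ⊥ := by
  rw [Ideal.comap_jacobson_of_surjective hsurj]
  calc (RingHom.ker p).jacobson
      ≤ (Ideal.jacobson ⊥ : Ideal B).jacobson := Ideal.jacobson_mono hker
    _ = Ideal.jacobson ⊥ := Ideal.jacobson_idem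

theorem isAdicComplete_map_mk_ker_comap (hsurj : Function.Surjective p) (I' : Ideal B')
    [IsAdicComplete I' B'] :
    IsAdicComplete ((I'.comap p).map (Ideal.Quotient.mk (RingHom.ker p)))
      (B ⧸ RingHom.ker p) := by
  let e : B ⧸ RingHom.ker p ≃+* B' := RingHom.quotientKerEquivOfSurjective hsurj
  have he : (e : B ⧸ RingHom.ker p →+* B').comp (Ideal.Quotient.mk _) = p :=
    RingHom.ext (RingHom.quotientKerEquivOfSurjective_apply_mk hsurj)
  have hmap : ((I'.comap p).map (Ideal.Quotient.mk (RingHom.ker p))).map e = I' := by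
    rw [← Ideal.map_coe e, Ideal.map_map, he, Ideal.map_comap_of_surjective p hsurj]
  rwa [← IsAdicComplete.congr_ringEquiv _ e, hmap]

end Ring

section Module

variable {R : Type u} [CommRing R] {I J : Ideal R}

theorem isPrecomplete_of_finite [IsPrecomplete I R] (M : Type v) [AddCommGroup M] [Module R M]
    [Module.Finite R M] : IsPrecomplete I M := by
  rw [← AdicCompletion.of_surjective_iff, ← LinearMap.range_eq_top, eq_top_iff]
  rintro x -
  obtain ⟨t, rfl⟩ := AdicCompletion.ofTensorProduct_surjective_of_finite I M x
  induction t with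
  | zero => simp only [map_zero, zero_mem]
  | add s t hs ht => rw [map_add]; exact add_mem hs ht
  | tmul a m =>
    obtain ⟨r, rfl⟩ := AdicCompletion.of_surjective I R a
    exact ⟨r • m, (algebraMap_smul (AdicCompletion I R) r (AdicCompletion.of I M m)).symm⟩

variable [IsNoetherianRing R]

theorem isPrecomplete_of_exact {M N P : Type u} [AddCommGroup M] [AddCommGroup N] [AddCommGroup P]
    [Module R M] [Module R N] [Module R P] [Module.Finite R N] {f : M →ₗ[R] N} {g : N →ₗ[R] P}
    (hf : Function.Injective f) (hfg : Function.Exact f g) (hg : Function.Surjective g)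
    [IsPrecomplete I M] [IsPrecomplete I P] : IsPrecomplete I N := by
  rw [← AdicCompletion.of_surjective_iff]
  intro x
  obtain ⟨z, hz⟩ := AdicCompletion.of_surjective I P (AdicCompletion.map I g x)
  obtain ⟨y, rfl⟩ := hg z
  have hker : AdicCompletion.map I g (x - AdicCompletion.of I N y) = 0 := by
    rw [map_sub, AdicCompletion.map_of, hz, sub_self]
  obtain ⟨w, hw⟩ := (AdicCompletion.map_exact hf hfg hg _).1 hker
  obtain ⟨m, rfl⟩ := AdicCompletion.of_surjective I M w
  exact ⟨f m + y, by rw [map_add, ← AdicCompletion.map_of, hw, sub_add_cancel]⟩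

theorem isPrecomplete_of_quotient_of_pow_smul_top_eq_bot
    [IsPrecomplete (I.map (Ideal.Quotient.mk J)) (R ⧸ J)] {n : ℕ} (M : Type u) [AddCommGroup M]
    [Module R M] [Module.Finite R M] (hM : J ^ n • (⊤ : Submodule R M) = ⊥) :
    IsPrecomplete I M := by
  induction n generalizing M with
  | zero =>
    rw [pow_zero, Ideal.one_eq_top, Submodule.top_smul] at hM
    have : Subsingleton M := (Submodule.subsingleton_iff R).1 (subsingleton_of_bot_eq_top hM.symm)
    infer_instance
  | succ n ih =>
    let N : Submodule R M := J • ⊤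
    have hN : J ^ n • (⊤ : Submodule R N) = ⊥ := by
      apply Submodule.map_injective_of_injective N.injective_subtype
      rw [Submodule.map_smul'', Submodule.map_top, Submodule.range_subtype, Submodule.map_bot,
        ← Submodule.mul_smul, ← pow_succ, hM]
    have : IsPrecomplete I N := ih N hN
    have : IsPrecomplete I (M ⧸ N) := by
      have : Module.Finite (R ⧸ J) (M ⧸ N) := .of_restrictScalars_finite R _ _
      exact IsPrecomplete.map_algebraMap_iff.1
        (isPrecomplete_of_finite (I := I.map (algebraMap R (R ⧸ J))) (M ⧸ N))
    exact isPrecomplete_of_exact N.injective_subtype (LinearMap.exact_subtype_mkQ N)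
      N.mkQ_surjective

theorem isAdicComplete_of_isAdicComplete_quotient (hJ : IsNilpotent J)
    [IsAdicComplete (I.map (Ideal.Quotient.mk J)) (R ⧸ J)] (M : Type u) [AddCommGroup M]
    [Module R M] [Module.Finite R M] : IsAdicComplete I M := by
  have hker : RingHom.ker (Ideal.Quotient.mk J) ≤ Ideal.jacobson ⊥ := by
    rw [Ideal.mk_ker]
    exact ((Ideal.FG.isNilpotent_iff_le_nilradical (IsNoetherian.noetherian J)).1 hJ).trans
      Ideal.radical_le_jacobson
  have hI : I ≤ Ideal.jacobson ⊥ :=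
    (Ideal.map_le_iff_le_comap.1 (IsAdicComplete.le_jacobson_bot _)).trans
      (comap_jacobson_bot_le_of_ker_le Ideal.Quotient.mk_surjective hker)
  obtain ⟨n, hn⟩ := hJ
  have : IsPrecomplete I M :=
    isPrecomplete_of_quotient_of_pow_smul_top_eq_bot (J := J) (n := n) M
      (by rw [hn, Submodule.zero_eq_bot, Submodule.bot_smul])
  exact { IsHausdorff.of_le_jacobson I M hI with prec' := this.prec' }

end Module

theorem stmt4_general {B : Type u} {B' : Type v} [CommRing B] [CommRing B'] (p : B →+* B')
    (hsurj : Function.Surjective p) (hfg : (RingHom.ker p).FG)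
    (hnil : RingHom.ker p ≤ nilradical B)
    [IsNoetherianRing B'] (I' : Ideal B') [IsAdicComplete I' B'] :
    IsNoetherianRing B ∧ IsAdicComplete (I'.comap p) B := by
  have hB : IsNoetherianRing B :=
    isNoetherianRing_of_surjective_of_ker_le_nilradical hsurj hfg hnil
  have := isAdicComplete_map_mk_ker_comap hsurj I'
  exact ⟨hB, isAdicComplete_of_isAdicComplete_quotient
    (hfg.isNilpotent_iff_le_nilradical.2 hnil) B⟩

/-- Let `p : B → B'` be a surjective ring homomorphism whose kernel `M` is finitely generated
and satisfies `M² = 0`. If `B'` is noetherian and `I'`-adically complete for an ideal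
`I' ⊆ B'`, then `B` is noetherian and `I`-adically complete for `I := p⁻¹(I')`. -/
theorem stmt4 {B B' : Type} [CommRing B] [CommRing B'] (p : B →+* B')
    (hsurj : Function.Surjective p)
    (hfg : (RingHom.ker p).FG)
    (hsq : (RingHom.ker p) ^ 2 = ⊥)
    [IsNoetherianRing B'] (I' : Ideal B') [IsAdicComplete I' B'] :
    IsNoetherianRing B ∧ IsAdicComplete (I'.comap p) B :=
  stmt4_general p hsurj hfg (hfg.isNilpotent_iff_le_nilradical.1 ⟨2, hsq⟩) I'
end

section
/- Let A → B be a homomorphism of commutative rings with B Noetherian, let K ⊆ B be an ideal, and let C = Λ_K B be the K-adic completion of B, regarded as an A-algebra via A → B → C. Then the canonical C-linear map Ω_{B/A} ⊗_B C → Ω_{C/A}, induced by functoriality of Kähler differentials, becomes an isomorphism after applying the (K·C)-adic completion functor to both sides. -/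
/-!
Modulo `Jᵏ` a derivation vanishes on `Kᵏ⁺¹`, by the Leibniz rule. So if `C / Jⁿ = B / Kⁿ` for all
`n`, where `J = K C`, then every derivation from `B` into a `C`-module killed by `Jᵏ` factors
through `B / Kᵏ⁺¹ = C / Jᵏ⁺¹` and hence extends to `C`. Extending the universal derivation of `B`
modulo `Jᵏ` gives a retraction of `C ⊗ Ω[B⁄A] → Ω[C⁄A]` modulo `Jᵏ`, whence injectivity on
completions. Surjectivity on completions only has to be tested modulo `J`, where it holds because
`C = B + J²` and `d (J²) ⊆ J Ω[C⁄A]`. For finitely generated `K`, the completion `C` of `B`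
satisfies `C / (K C)ⁿ = B / Kⁿ`.
-/

section AdicInjectivity

variable {R M N : Type*} [CommRing R] [AddCommGroup M] [AddCommGroup N] [Module R M] [Module R N]

theorem adicCompletion_map_injective_of_comap_le {I : Ideal R} {f : M →ₗ[R] N}
    (h : ∀ n, (I ^ n • ⊤ : Submodule R N).comap f ≤ I ^ n • ⊤) :
    Function.Injective (AdicCompletion.map I f) := by
  rw [injective_iff_map_eq_zero]
  intro x hx
  ext n
  obtain ⟨m, hm⟩ := Submodule.mkQ_surjective _ (x.val n)
  have hfm : f.reduceModIdeal (I ^ n) (x.val n) = 0 := by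
    rw [← AdicCompletion.map_val_apply, hx, AdicCompletion.val_zero, Pi.zero_apply]
  rw [← hm, Submodule.mkQ_apply, LinearMap.reduceModIdeal_apply] at hfm
  have hfm' : f m ∈ (I ^ n • ⊤ : Submodule R N) := (Submodule.Quotient.mk_eq_zero _).1 hfm
  rw [← hm]
  exact (Submodule.Quotient.mk_eq_zero _).2 (h n hfm')

theorem le_annihilator_quotient_smul_top (I : Ideal R) :
    I ≤ Module.annihilator R (M ⧸ (I • ⊤ : Submodule R M)) :=
  (Module.isTorsionBySet_iff_subset_annihilator _ _).1
    (Module.isTorsionBySet_quotient_ideal_smul M I)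

theorem comap_smul_top_le_of_comp_eq_mkQ {I : Ideal R} {f : M →ₗ[R] N}
    {g : N →ₗ[R] M ⧸ (I • ⊤ : Submodule R M)} (h : g ∘ₗ f = Submodule.mkQ _) :
    (I • ⊤ : Submodule R N).comap f ≤ I • ⊤ := by
  intro m hm
  have hmap : (I • ⊤ : Submodule R N).map g ≤ ⊥ := by
    rw [Submodule.map_smul'']
    refine Submodule.smul_le.2 fun r hr x _ ↦ ?_
    exact Module.mem_annihilator.1 (le_annihilator_quotient_smul_top I hr) x
  have hgf : (g ∘ₗ f) m = 0 := hmap (Submodule.mem_map_of_mem hm)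
  rw [h] at hgf
  exact (Submodule.Quotient.mk_eq_zero _).1 hgf

end AdicInjectivity

theorem derivation_apply_mem_pow_smul_top {A B M : Type*} [CommRing A] [CommRing B] [Algebra A B]
    [AddCommGroup M] [Module A M] [Module B M] (D : Derivation A B M) (I : Ideal B) {k : ℕ} {x : B}
    (hx : x ∈ I ^ (k + 1)) : D x ∈ (I ^ k • ⊤ : Submodule B M) := by
  induction k generalizing x with
  | zero => simp
  | succ k ih =>
    rw [pow_succ] at hx
    induction hx using Submodule.mul_induction_on' with
    | mem_mul_mem a ha b hb =>
      rw [D.leibniz]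
      refine add_mem (Submodule.smul_mem_smul ha trivial) ?_
      rw [pow_succ', mul_smul]
      exact Submodule.smul_mem_smul hb (ih ha)
    | add a _ b _ ha hb => rw [map_add]; exact add_mem ha hb

theorem exists_comp_eq_of_surjective_of_ker_le {R M N P : Type*} [Ring R] [AddCommGroup M]
    [AddCommGroup N] [AddCommGroup P] [Module R M] [Module R N] [Module R P] {p : M →ₗ[R] P}
    (hp : Function.Surjective p) {f : M →ₗ[R] N} (h : p.ker ≤ f.ker) :
    ∃ g : P →ₗ[R] N, g ∘ₗ p = f := by
  refine ⟨p.ker.liftQ f h ∘ₗ (p.quotKerEquivOfSurjective hp).symm.toLinearMap,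
    LinearMap.ext fun x ↦ ?_⟩
  simp only [LinearMap.comp_apply, LinearEquiv.coe_coe,
    LinearMap.quotKerEquivOfSurjective_symm_apply, Submodule.liftQ_apply]

section BaseChange

open TensorProduct KaehlerDifferential

variable {A B C : Type*} [CommRing A] [CommRing B] [CommRing C] [Algebra A B] [Algebra B C]

section Extension

variable [Algebra A C] [IsScalarTower A B C]
  {N : Type*} [AddCommGroup N] [Module A N] [Module B N] [Module C N] [IsScalarTower B C N]

theorem exists_derivation_compAlgebraMap_eq {J : Ideal C} (hN : J ≤ Module.annihilator C N)
    (hsurj : Function.Surjective (algebraMap B (C ⧸ J))) (D : Derivation A B N)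
    (hD : ∀ b, algebraMap B C b ∈ J → D b = 0) :
    ∃ E : Derivation A C N, E.compAlgebraMap B = D := by
  let π : B →ₗ[A] C ⧸ J := (IsScalarTower.toAlgHom A B (C ⧸ J)).toLinearMap
  have hker : π.ker ≤ (D : B →ₗ[A] N).ker := fun b hb ↦ hD b (Ideal.Quotient.eq_zero_iff_mem.1 hb)
  obtain ⟨D', hD'⟩ := exists_comp_eq_of_surjective_of_ker_le (p := π) hsurj hker
  let E : C →ₗ[A] N := D' ∘ₗ (Ideal.Quotient.mkₐ A J).toLinearMap
  have hE (c : C) (b : B) (hcb : algebraMap B (C ⧸ J) b = Ideal.Quotient.mk J c) : E c = D b :=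
    (congrArg D' hcb).symm.trans (LinearMap.congr_fun hD' b)
  have hsmul (c : C) (b : B) (hcb : algebraMap B (C ⧸ J) b = Ideal.Quotient.mk J c) (n : N) :
      c • n = b • n := by
    rw [← algebraMap_smul C b n, ← sub_eq_zero, ← sub_smul]
    exact Module.mem_annihilator.1 (hN (Ideal.Quotient.eq.1 hcb.symm)) n
  refine ⟨Derivation.mk' E fun c c' ↦ ?_, Derivation.ext fun b ↦ hE _ b rfl⟩
  obtain ⟨b, hb⟩ := hsurj (Ideal.Quotient.mk J c)
  obtain ⟨b', hb'⟩ := hsurj (Ideal.Quotient.mk J c')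
  rw [hE (c * c') (b * b') (by rw [map_mul, map_mul, hb, hb']), hE c b hb, hE c' b' hb',
    hsmul c b hb, hsmul c' b' hb', D.leibniz]

theorem exists_derivation_compAlgebraMap_eq_of_pow_le_annihilator {K : Ideal B} {k : ℕ}
    (hN : K.map (algebraMap B C) ^ k ≤ Module.annihilator C N)
    (hsurj : Function.Surjective (algebraMap B (C ⧸ K.map (algebraMap B C) ^ (k + 1))))
    (hcomap : (K.map (algebraMap B C) ^ (k + 1)).comap (algebraMap B C) ≤ K ^ (k + 1))
    (D : Derivation A B N) : ∃ E : Derivation A C N, E.compAlgebraMap B = D := by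
  have hbot : (K ^ k • ⊤ : Submodule B N) = ⊥ := by
    refine eq_bot_iff.2 (Submodule.smul_le.2 fun b hb n _ ↦ ?_)
    rw [Submodule.mem_bot, ← algebraMap_smul C b n]
    refine Module.mem_annihilator.1 (hN ?_) n
    rw [← Ideal.map_pow]
    exact Ideal.mem_map_of_mem _ hb
  refine exists_derivation_compAlgebraMap_eq
    ((Ideal.pow_le_pow_right k.le_succ).trans hN) hsurj D fun b hb ↦ ?_
  rw [← Submodule.mem_bot B, ← hbot]
  exact derivation_apply_mem_pow_smul_top D K (hcomap hb)

end Extension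

variable [Algebra A C] [IsScalarTower A B C]

theorem liftKaehlerDifferential_comp_mapBaseChange {N : Type*} [AddCommGroup N] [Module A N]
    [Module C N] [IsScalarTower A C N] (g : C ⊗[B] Ω[B⁄A] →ₗ[C] N) (E : Derivation A C N)
    (h : ∀ b, E (algebraMap B C b) = g (1 ⊗ₜ D A B b)) :
    E.liftKaehlerDifferential ∘ₗ mapBaseChange A B C = g := by
  let : Module B N := Module.compHom N (algebraMap B C)
  have : IsScalarTower B C N := .of_algebraMap_smul fun _ _ ↦ rfl
  have : IsScalarTower A B N := .to₁₂₄ A B C N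
  ext b
  simpa using h b

theorem comap_mapBaseChange_pow_smul_top_le {K : Ideal B} {k : ℕ}
    (hsurj : Function.Surjective (algebraMap B (C ⧸ K.map (algebraMap B C) ^ (k + 1))))
    (hcomap : (K.map (algebraMap B C) ^ (k + 1)).comap (algebraMap B C) ≤ K ^ (k + 1)) :
    (K.map (algebraMap B C) ^ k • ⊤ : Submodule C Ω[C⁄A]).comap (mapBaseChange A B C) ≤
      K.map (algebraMap B C) ^ k • ⊤ := by
  let q := Submodule.mkQ (K.map (algebraMap B C) ^ k • ⊤ : Submodule C (C ⊗[B] Ω[B⁄A]))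
  let d := (q.restrictScalars B ∘ₗ TensorProduct.mk B C Ω[B⁄A] 1).compDer (D A B)
  obtain ⟨E, hE⟩ := exists_derivation_compAlgebraMap_eq_of_pow_le_annihilator
    (le_annihilator_quotient_smul_top _) hsurj hcomap d
  exact comap_smul_top_le_of_comp_eq_mkQ
    (liftKaehlerDifferential_comp_mapBaseChange q E (Derivation.congr_fun hE))

theorem mkQ_comp_mapBaseChange_surjective {J : Ideal C}
    (hsurj : Function.Surjective (algebraMap B (C ⧸ J ^ 2))) :
    Function.Surjective ((J • ⊤ : Submodule C Ω[C⁄A]).mkQ ∘ₗ mapBaseChange A B C) := by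
  rw [← LinearMap.range_eq_top, eq_top_iff, ← Submodule.range_mkQ, LinearMap.range_eq_map]
  refine (Submodule.map_mono (span_range_derivation A C).ge).trans
    ((Submodule.map_span_le _ _ _).2 ?_)
  rintro _ ⟨c, rfl⟩
  obtain ⟨b, hb⟩ := hsurj (Ideal.Quotient.mk (J ^ 2) c)
  refine ⟨1 ⊗ₜ D A B b, (Submodule.Quotient.eq _).2 ?_⟩
  have hdiff : D A C (algebraMap B C b - c) ∈ (J ^ 1 • ⊤ : Submodule C Ω[C⁄A]) :=
    derivation_apply_mem_pow_smul_top _ J (Ideal.Quotient.eq.1 hb)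
  simpa only [mapBaseChange_tmul, map_D, one_smul, pow_one, map_sub] using hdiff

theorem adicCompletion_map_mapBaseChange_bijective {K : Ideal B}
    (hsurj : ∀ n, Function.Surjective (algebraMap B (C ⧸ K.map (algebraMap B C) ^ n)))
    (hcomap : ∀ n, (K.map (algebraMap B C) ^ n).comap (algebraMap B C) ≤ K ^ n) :
    Function.Bijective
      (AdicCompletion.map (K.map (algebraMap B C)) (mapBaseChange A B C)) :=
  ⟨adicCompletion_map_injective_of_comap_le fun _ ↦
      comap_mapBaseChange_pow_smul_top_le (hsurj _) (hcomap _),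
    AdicCompletion.map_surjective_of_mkQ_comp_surjective
      (mkQ_comp_mapBaseChange_surjective (hsurj 2))⟩

end BaseChange

section Completion

variable {B : Type*} [CommRing B] {K : Ideal B}

theorem map_algebraMap_adicCompletion_pow_eq_ker_evalₐ (hK : K.FG) (n : ℕ) :
    K.map (algebraMap B (AdicCompletion K B)) ^ n = RingHom.ker (AdicCompletion.evalₐ K n) := by
  ext c
  rw [← Ideal.map_pow, ← Submodule.restrictScalars_mem B, ← Ideal.smul_top_eq_map,
    AdicCompletion.pow_smul_top_eq_ker_eval hK]
  exact (map_eq_zero_iff (Ideal.quotientEquivAlgOfEq B (Ideal.mul_top (K ^ n)))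
    (AlgEquiv.injective _)).symm

theorem algebraMap_adicCompletion_quotient_surjective (hK : K.FG) (n : ℕ) :
    Function.Surjective (algebraMap B
      (AdicCompletion K B ⧸ K.map (algebraMap B (AdicCompletion K B)) ^ n)) := by
  intro y
  obtain ⟨c, rfl⟩ := Ideal.Quotient.mk_surjective y
  obtain ⟨b, hb⟩ := Ideal.Quotient.mk_surjective (AdicCompletion.evalₐ K n c)
  refine ⟨b, Ideal.Quotient.eq.2 ?_⟩
  rw [map_algebraMap_adicCompletion_pow_eq_ker_evalₐ hK, RingHom.mem_ker, map_sub,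
    AlgHom.commutes, ← hb, sub_eq_zero]
  rfl

theorem comap_map_algebraMap_adicCompletion_pow_le (hK : K.FG) (n : ℕ) :
    (K.map (algebraMap B (AdicCompletion K B)) ^ n).comap (algebraMap B (AdicCompletion K B)) ≤
      K ^ n := by
  intro b hb
  rw [map_algebraMap_adicCompletion_pow_eq_ker_evalₐ hK, Ideal.mem_comap, RingHom.mem_ker,
    AlgHom.commutes] at hb
  exact Ideal.Quotient.eq_zero_iff_mem.1 hb

end Completion

theorem stmt5_general (A B : Type*) [CommRing A] [CommRing B] [Algebra A B] (K : Ideal B)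
    (hK : K.FG) :
    letI C := AdicCompletion K B
    letI : Algebra A C := ((algebraMap B C).comp (algebraMap A B)).toAlgebra
    letI : @IsScalarTower A B C Algebra.toSMul Algebra.toSMul Algebra.toSMul :=
      IsScalarTower.of_algebraMap_eq' rfl
    Function.Bijective
      (AdicCompletion.map (K.map (algebraMap B C))
        (KaehlerDifferential.mapBaseChange A B C)) := by
  let : Algebra A (AdicCompletion K B) :=
    ((algebraMap B (AdicCompletion K B)).comp (algebraMap A B)).toAlgebra
  let : @IsScalarTower A B (AdicCompletion K B) Algebra.toSMul Algebra.toSMul Algebra.toSMul :=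
    IsScalarTower.of_algebraMap_eq' rfl
  exact adicCompletion_map_mapBaseChange_bijective
    (algebraMap_adicCompletion_quotient_surjective hK)
    (comap_map_algebraMap_adicCompletion_pow_le hK)

/-- Let `A → B` be a homomorphism of commutative rings with `B` noetherian, `K ⊆ B` an ideal and
`C = Λ_K B` the `K`-adic completion, regarded as `A`-algebra via `A → B → C`. Then the canonical
`C`-linear map `Ω_{B/A} ⊗_B C → Ω_{C/A}` becomes an isomorphism after applying the `(K·C)`-adic
completion functor. -/
theorem stmt5 (A B : Type) [CommRing A] [CommRing B] [Algebra A B]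
    [IsNoetherianRing B] (K : Ideal B) :
    letI C := AdicCompletion K B
    letI : Algebra A C := ((algebraMap B C).comp (algebraMap A B)).toAlgebra
    letI : @IsScalarTower A B C Algebra.toSMul Algebra.toSMul Algebra.toSMul :=
      IsScalarTower.of_algebraMap_eq' rfl
    Function.Bijective
      (AdicCompletion.map (K.map (algebraMap B C))
        (KaehlerDifferential.mapBaseChange A B C)) :=
  stmt5_general A B K K.fg_of_isNoetherianRing
end

section
/- Let A → B be a formally smooth homomorphism of commutative rings and let B → C be a surjective ring homomorphism with kernel J. Then the sequence of C-modules 0 → H₁(L_{C/A}) → J/J² → C ⊗_B Ω_{B/A} → Ω_{C/A} → 0 is exact, where the map J/J² → C ⊗_B Ω_{B/A} sends the class of x ∈ J to 1 ⊗ d_{B/A}(x), and the map C ⊗_B Ω_{B/A} → Ω_{C/A} is the canonical one. -/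
/- For any extension `P` of `S` over `R` with kernel `J`, functoriality gives a map
`H₁(L_{S/R}) → H₁(L_{S/P}) = J/J²`, and the Jacobi–Zariski sequence of `R → P → S` says that its
image is the kernel of `d : J/J² → S ⊗ Ω_{P/R}`. If `P` is formally smooth, the comparison of the
standard presentation of `S` with `P` can be inverted modulo squares of the kernels; maps of
extensions of `S` are homotopic, so `H₁(L_{S/R}) → ker d` is then an isomorphism. -/

section Extension

open Algebra

variable {R S : Type*} [CommRing R] [CommRing S] [Algebra R S]

/-- The canonical map from the first André–Quillen homology `H₁(L_{S/R})` to the conormal module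
of an extension `P` of `S` over `R`, induced by comparing the standard presentation with `P`. -/
noncomputable def h1CotangentToCotangent (P : Extension R S) :
    H1Cotangent R S →ₗ[S] P.Cotangent :=
  Extension.h1Cotangentι ∘ₗ Extension.H1Cotangent.map P.defaultHom

theorem exact_h1CotangentToCotangent_cotangentComplex (P : Extension R S) :
    Function.Exact (h1CotangentToCotangent P) P.cotangentComplex :=
  (Extension.H1Cotangent.map_defaultHom_surjective P).comp_exact_iff_exact.mpr
    Extension.exact_hCotangentι_cotangentComplex

theorem h1CotangentToCotangent_injective (P : Extension R S) [FormallySmooth R P.Ring] :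
    Function.Injective (h1CotangentToCotangent P) := by
  have : FormallySmooth R (Generators.self R S).toExtension.Ring :=
    inferInstanceAs (FormallySmooth R (MvPolynomial S R))
  have map_injective : Function.Injective (Extension.H1Cotangent.map P.defaultHom) := by
    rw [← Extension.H1Cotangent.equivOfFormallySmooth_toLinearMap]
    exact LinearEquiv.injective _
  exact Extension.h1Cotangentι_injective.comp map_injective

end Extension

section Surjective

open Algebra KaehlerDifferential

variable (A : Type*) {B C : Type*} [CommRing A] [CommRing B] [CommRing C]
  [Algebra A B] [Algebra B C] [Algebra A C] [IsScalarTower A B C]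

/-- A surjective `A`-algebra structure map `B → C`, viewed as an extension of `C` over `A`.
Unlike `Algebra.Extension.ofSurjective`, it reuses the given `B`-algebra structure on `C`. -/
noncomputable abbrev extensionOfSurjective (h : Function.Surjective (algebraMap B C)) :
    Extension A C where
  Ring := B
  σ := Function.surjInv h
  algebraMap_σ := Function.surjInv_eq h

/-- The canonical map `H₁(L_{C/A}) → J/J²` for a surjection `B → C` of `A`-algebras with
kernel `J`. -/
noncomputable def h1CotangentToKerCotangent (h : Function.Surjective (algebraMap B C)) :
    H1Cotangent A C →ₗ[B] (RingHom.ker (algebraMap B C)).Cotangent :=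
  (extensionOfSurjective A h).cotangentEquivCotangentKer.toLinearMap ∘ₗ
    (h1CotangentToCotangent (extensionOfSurjective A h)).restrictScalars B

theorem exact_h1CotangentToKerCotangent_kerCotangentToTensor
    (h : Function.Surjective (algebraMap B C)) :
    Function.Exact (h1CotangentToKerCotangent A h) (kerCotangentToTensor A B C) :=
  -- `cotangentComplex` is `kerCotangentToTensor` read through the synonym `Extension.Cotangent`.
  exact_h1CotangentToCotangent_cotangentComplex (extensionOfSurjective A h)

theorem h1CotangentToKerCotangent_injective [FormallySmooth A B]
    (h : Function.Surjective (algebraMap B C)) :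
    Function.Injective (h1CotangentToKerCotangent A h) :=
  (extensionOfSurjective A h).cotangentEquivCotangentKer.injective.comp
    (h1CotangentToCotangent_injective (extensionOfSurjective A h))

theorem stmt7_general [FormallySmooth A B] (h : Function.Surjective (algebraMap B C)) :
    Function.Injective (h1CotangentToKerCotangent A h) ∧
      Function.Exact (h1CotangentToKerCotangent A h) (kerCotangentToTensor A B C) ∧
      Function.Exact (kerCotangentToTensor A B C) (mapBaseChange A B C) ∧
      Function.Surjective (mapBaseChange A B C) :=
  ⟨h1CotangentToKerCotangent_injective A h,
    exact_h1CotangentToKerCotangent_kerCotangentToTensor A h,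
    exact_kerCotangentToTensor_mapBaseChange A B C h,
    mapBaseChange_surjective A B C h⟩

end Surjective

/-- Let `A → B` be formally smooth and `B → C` surjective with kernel `J`. Then the sequence of
modules `0 → H₁(L_{C/A}) → J/J² → C ⊗_B Ω_{B/A} → Ω_{C/A} → 0` is exact, where
`J/J² → C ⊗_B Ω_{B/A}` sends the class of `x` to `1 ⊗ d x` (this is
`KaehlerDifferential.kerCotangentToTensor`) and `C ⊗_B Ω_{B/A} → Ω_{C/A}` is the canonical map
(`KaehlerDifferential.mapBaseChange`). -/
theorem stmt7 {A B C : Type} [CommRing A] [CommRing B] [CommRing C]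
    [Algebra A B] [Algebra B C] [Algebra A C] [IsScalarTower A B C]
    [Algebra.FormallySmooth A B]
    (hsurj : Function.Surjective (algebraMap B C)) :
    letI : Module B (Algebra.H1Cotangent A C) := Module.compHom _ (algebraMap B C)
    ∃ e : Algebra.H1Cotangent A C →ₗ[B] (RingHom.ker (algebraMap B C)).Cotangent,
      Function.Injective e ∧
      Function.Exact e (KaehlerDifferential.kerCotangentToTensor A B C) ∧
      Function.Exact (KaehlerDifferential.kerCotangentToTensor A B C)
        (KaehlerDifferential.mapBaseChange A B C) ∧
      Function.Surjective (KaehlerDifferential.mapBaseChange A B C) := by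
  -- `Module.compHom` unfolds to the `B`-module structure carried by `h1CotangentToKerCotangent`.
  exact ⟨h1CotangentToKerCotangent A hsurj, stmt7_general A hsurj⟩
end

section
/- Let A → B be a formally smooth homomorphism of Noetherian commutative rings, let x₁, …, x_r ∈ B be a regular sequence generating an ideal J ⊆ B, and set C = B/J. Then: (1) the conormal module J/J² is a free C-module of rank r with basis the residue classes of x₁, …, x_r; and (2) the first André–Quillen homology H₁(L_{C/A}) is isomorphic, as a C-module, to the kernel of the map J/J² → C ⊗_B Ω_{B/A} sending the class of x ∈ J to 1 ⊗ d_{B/A}(x). -/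
/-!
If `∑ xᵢ mᵢ = 0` with `x₁, …, xₙ` weakly regular on `M`, then `mₙ ∈ (x₁, …, xₙ₋₁)M` because `xₙ` is
regular modulo this submodule; expanding `mₙ` there leaves a relation among `x₁, …, xₙ₋₁`, and by
induction every `mᵢ` lies in `(x₁, …, xₙ)M`. For `M = B` this says that the relations among the
generators `xᵢ` of `J` have coefficients in `J`, that is, that the classes of the `xᵢ` in `J/J²` are
independent over `B/J`.

For `C = B/J`, the surjection `B → C` is a formally smooth extension of `C` over `A`, and any such
extension computes `H₁(L_{C/A})` as the kernel of `J/J² → C ⊗ Ω_{B/A}`.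
-/

open Algebra KaehlerDifferential RingTheory.Sequence

section WeaklyRegular

variable {R M : Type*} [CommRing R] [AddCommGroup M] [Module R M]

lemma mem_span_range_smul_top_iff {ι : Type*} [Fintype ι] {x : ι → R} {m : M} :
    m ∈ Ideal.span (Set.range x) • (⊤ : Submodule R M) ↔ ∃ d : ι → M, ∑ i, x i • d i = m := by
  constructor
  · intro hm
    induction hm using Submodule.smul_induction_on' with
    | smul r hr m _ =>
      obtain ⟨c, rfl⟩ := Ideal.mem_span_range_iff_exists_fun.mp hr
      exact ⟨fun i ↦ c i • m, by simp only [Finset.sum_smul, smul_smul, mul_comm]⟩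
    | add m _ m' _ ih ih' =>
      obtain ⟨d, rfl⟩ := ih
      obtain ⟨d', rfl⟩ := ih'
      exact ⟨d + d', by simp only [Pi.add_apply, smul_add, Finset.sum_add_distrib]⟩
  · rintro ⟨d, rfl⟩
    exact sum_mem fun i _ ↦
      Submodule.smul_mem_smul (Ideal.subset_span (Set.mem_range_self i)) Submodule.mem_top

lemma ofList_ofFn {n : ℕ} (x : Fin n → R) :
    Ideal.ofList (List.ofFn x) = Ideal.span (Set.range x) := by
  simp only [Ideal.ofList, List.mem_ofFn, Set.range]

lemma isWeaklyRegular_ofFn_succ_iff {n : ℕ} {x : Fin (n + 1) → R} :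
    IsWeaklyRegular M (List.ofFn x) ↔
      IsWeaklyRegular M (List.ofFn fun i : Fin n ↦ x i.castSucc) ∧
        ∀ m : M, x (Fin.last n) • m ∈
            Ideal.span (Set.range fun i : Fin n ↦ x i.castSucc) • (⊤ : Submodule R M) →
          m ∈ Ideal.span (Set.range fun i : Fin n ↦ x i.castSucc) • (⊤ : Submodule R M) := by
  rw [List.ofFn_succ_last, isWeaklyRegular_append_iff, isWeaklyRegular_singleton_iff,
    isSMulRegular_iff_right_eq_zero_of_smul, (Submodule.Quotient.mk_surjective _).forall]
  simp only [← Submodule.Quotient.mk_smul, Submodule.Quotient.mk_eq_zero, ofList_ofFn]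

lemma mem_span_range_smul_top_of_sum_smul_eq_zero {n : ℕ} {x : Fin n → R}
    (hx : IsWeaklyRegular M (List.ofFn x)) {m : Fin n → M} (hm : ∑ i, x i • m i = 0) (i : Fin n) :
    m i ∈ Ideal.span (Set.range x) • (⊤ : Submodule R M) := by
  induction n with
  | zero => exact i.elim0
  | succ n ih =>
    obtain ⟨hinit, hlast⟩ := isWeaklyRegular_ofFn_succ_iff.mp hx
    have hle : Ideal.span (Set.range fun i : Fin n ↦ x i.castSucc) • (⊤ : Submodule R M) ≤
        Ideal.span (Set.range x) • ⊤ :=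
      Submodule.smul_mono_left (Ideal.span_mono (Set.range_comp_subset_range Fin.castSucc x))
    rw [Fin.sum_univ_castSucc] at hm
    have hm_last : m (Fin.last n) ∈
        Ideal.span (Set.range fun i : Fin n ↦ x i.castSucc) • (⊤ : Submodule R M) := by
      apply hlast
      rw [eq_neg_of_add_eq_zero_right hm]
      exact neg_mem (mem_span_range_smul_top_iff.mpr ⟨_, rfl⟩)
    obtain ⟨d, hd⟩ := mem_span_range_smul_top_iff.mp hm_last
    -- Substituting `mₙ = ∑ xᵢ dᵢ` turns the relation into one among the first `n` terms.
    have hrel : ∑ i : Fin n, x i.castSucc • (m i.castSucc + x (Fin.last n) • d i) = 0 := by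
      simp only [smul_add, Finset.sum_add_distrib, smul_comm _ (x (Fin.last n)), ← Finset.smul_sum,
        hd, hm]
    cases i using Fin.lastCases with
    | last => exact hle hm_last
    | cast i =>
      refine (Submodule.add_mem_iff_left _ ?_).mp (hle (ih hinit hrel i))
      exact Submodule.smul_mem_smul (Ideal.subset_span (Set.mem_range_self _)) Submodule.mem_top

lemma mem_span_range_of_sum_mul_eq_zero {n : ℕ} {x : Fin n → R}
    (hx : IsWeaklyRegular R (List.ofFn x)) {c : Fin n → R} (hc : ∑ i, c i * x i = 0) (i : Fin n) :
    c i ∈ Ideal.span (Set.range x) := by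
  simpa only [smul_eq_mul, Ideal.mul_top] using
    mem_span_range_smul_top_of_sum_smul_eq_zero hx
      (by simpa only [smul_eq_mul, mul_comm] using hc) i

end WeaklyRegular

section Quotient

variable {R M ι : Type*} [CommRing R] [AddCommGroup M] [Module R M]

lemma linearIndependent_mkQ_smul_top (I : Ideal R) {v : ι → M}
    (hspan : Submodule.span R (Set.range v) = ⊤)
    (hrel : ∀ c : ι →₀ R, Finsupp.linearCombination R v c = 0 → ∀ i, c i ∈ I) :
    LinearIndependent (R ⧸ I) fun i ↦ (I • ⊤ : Submodule R M).mkQ (v i) := by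
  rw [linearIndependent_iff]
  intro l hl
  obtain ⟨c, rfl⟩ :=
    Finsupp.mapRange_surjective (Ideal.Quotient.mk I) (map_zero _) Ideal.Quotient.mk_surjective l
  have hc : Finsupp.linearCombination R v c ∈ I • Submodule.span R (Set.range v) := by
    rw [hspan, ← Submodule.ker_mkQ (I • ⊤ : Submodule R M), LinearMap.mem_ker, ← hl]
    simp only [Finsupp.linearCombination_apply, map_finsuppSum, map_smul, zero_smul, implies_true,
      Finsupp.sum_mapRange_index]
    rfl
  obtain ⟨d, hd, hdc⟩ := (Submodule.mem_ideal_smul_span_iff_exists_sum ..).mp hc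
  have hcd := hrel (c - d) (by rw [map_sub, ← hdc, Finsupp.linearCombination_apply, sub_self])
  ext i
  rw [Finsupp.mapRange_apply, Finsupp.zero_apply, Ideal.Quotient.eq_zero_iff_mem]
  exact (Submodule.sub_mem_iff_left _ (hd i)).mp (hcd i)

lemma span_mkQ_smul_top (I : Ideal R) {v : ι → M}
    (hspan : Submodule.span R (Set.range v) = ⊤) :
    Submodule.span (R ⧸ I) (Set.range fun i ↦ (I • ⊤ : Submodule R M).mkQ (v i)) = ⊤ := by
  apply Submodule.span_eq_top_of_span_eq_top (R := R)
  rw [← Function.comp_def, Set.range_comp, ← Submodule.map_span, hspan, Submodule.map_top,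
    Submodule.range_mkQ]

end Quotient

section Cotangent

variable {R : Type*} [CommRing R] {I : Ideal R}

lemma span_range_toCotangent {ι : Type*} {x : ι → R} (hI : Ideal.span (Set.range x) = I) :
    Submodule.span (R ⧸ I) (Set.range fun i ↦
      I.toCotangent ⟨x i, hI.le Ideal.mem_span_range_self⟩) = ⊤ :=
  span_mkQ_smul_top I ((Submodule.span_range_subtype_eq_top_iff I _).mpr hI)

variable {n : ℕ} {x : Fin n → R}

lemma linearIndependent_toCotangent (hI : Ideal.span (Set.range x) = I)
    (hx : IsWeaklyRegular R (List.ofFn x)) :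
    LinearIndependent (R ⧸ I) fun i ↦
      I.toCotangent ⟨x i, hI.le Ideal.mem_span_range_self⟩ := by
  refine linearIndependent_mkQ_smul_top I ((Submodule.span_range_subtype_eq_top_iff I _).mpr hI)
    fun c hc i ↦ ?_
  have hsum : ∑ i, c i * x i = 0 := by
    simpa [Finsupp.linearCombination_apply, Finsupp.sum_fintype] using congrArg I.subtype hc
  exact hI.le (mem_span_range_of_sum_mul_eq_zero hx hsum i)

/-- The basis of the conormal module `I/I²` given by the classes of a weakly regular sequence
`x₁, …, xₙ` generating `I`. The generation hypothesis is an equation so that `I` may be given in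
another form, such as `Ideal.ofList`. -/
noncomputable def cotangentBasis (hI : Ideal.span (Set.range x) = I)
    (hx : IsWeaklyRegular R (List.ofFn x)) : Module.Basis (Fin n) (R ⧸ I) I.Cotangent :=
  .mk (linearIndependent_toCotangent hI hx) (span_range_toCotangent hI).ge

lemma cotangentBasis_apply (hI : Ideal.span (Set.range x) = I)
    (hx : IsWeaklyRegular R (List.ofFn x)) (i : Fin n) :
    cotangentBasis hI hx i = I.toCotangent ⟨x i, hI.le Ideal.mem_span_range_self⟩ :=
  Module.Basis.mk_apply ..

end Cotangent

section H1Cotangent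

variable {A B C : Type*} [CommRing A] [CommRing B] [CommRing C] [Algebra A B] [Algebra A C]

/-- The `H₁` of the naive cotangent complex of an extension `P → C`, as the kernel of
`J/J² → C ⊗ Ω_{P/A}` with `J/J²` regarded as a module over `P` instead of over `C`. -/
noncomputable def extensionH1CotangentEquivKer (P : Extension A C) :
    P.H1Cotangent ≃ₗ[P.Ring] LinearMap.ker (kerCotangentToTensor A P.Ring C) :=
  Extension.cotangentEquivCotangentKer.ofSubmodules
    (P.cotangentComplex.ker.restrictScalars P.Ring) _ (Submodule.map_equiv_eq_comap_symm _ _)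

variable [Algebra B C] [IsScalarTower A B C]

/-- The identification of `H₁(L_{C/A})` with the kernel of `J/J² → C ⊗ Ω_{B/A}`, where `A → B` is
formally smooth and `J` is the kernel of a surjection `B → C`. It is linear over `B` because the
conormal module is, in Mathlib, a `B`-module. -/
noncomputable def h1CotangentEquivKer [FormallySmooth A B]
    (hBC : Function.Surjective (algebraMap B C)) :
    H1Cotangent A C ≃ₗ[B] LinearMap.ker (kerCotangentToTensor A B C) :=
  let P : Extension A C := ⟨B, _, Function.surjInv_eq hBC⟩
  have : FormallySmooth A P.Ring := ‹_›
  (P.equivH1CotangentOfFormallySmooth.symm.restrictScalars B).trans (extensionH1CotangentEquivKer P)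

end H1Cotangent

theorem stmt8_general {A B : Type*} [CommRing A] [CommRing B] [Algebra A B]
    [FormallySmooth A B] (xs : List B) (hreg : IsWeaklyRegular B xs) :
    letI J : Ideal B := Ideal.ofList xs
    letI : Module B (H1Cotangent A (B ⧸ J)) := Module.compHom _ (algebraMap B (B ⧸ J))
    (∃ b : Module.Basis (Fin xs.length) (B ⧸ J) J.Cotangent,
        ∀ i : Fin xs.length,
          b i = J.toCotangent ⟨xs[i], Ideal.subset_span (List.getElem_mem i.isLt)⟩) ∧
      Nonempty (H1Cotangent A (B ⧸ J) ≃ₗ[B]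
        LinearMap.ker (kerCotangentToTensor A B (B ⧸ J))) := by
  have hxs : List.ofFn (fun i : Fin xs.length ↦ xs[i]) = xs := List.ofFn_getElem
  have hspan : Ideal.span (Set.range fun i : Fin xs.length ↦ xs[i]) = Ideal.ofList xs := by
    rw [← ofList_ofFn, hxs]
  exact ⟨⟨cotangentBasis hspan (hxs.symm ▸ hreg), cotangentBasis_apply _ _⟩,
    ⟨h1CotangentEquivKer Ideal.Quotient.mk_surjective⟩⟩

/-- Let `A → B` be a formally smooth homomorphism of noetherian commutative rings, let
`x₁, …, x_r ∈ B` be a regular sequence generating an ideal `J`, and `C = B ⧸ J`. Then: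
(1) the conormal module `J/J²` is a free `C`-module of rank `r` with basis the residue classes
of the `xᵢ`; and (2) `H₁(L_{C/A})` is isomorphic to the kernel of the map
`J/J² → C ⊗_B Ω_{B/A}` sending the class of `x` to `1 ⊗ d x`
(`KaehlerDifferential.kerCotangentToTensor`). -/
theorem stmt8 {A B : Type} [CommRing A] [CommRing B] [Algebra A B]
    [IsNoetherianRing A] [IsNoetherianRing B] [Algebra.FormallySmooth A B]
    (xs : List B) (hreg : RingTheory.Sequence.IsRegular B xs) :
    letI J : Ideal B := Ideal.ofList xs
    letI : Module B (Algebra.H1Cotangent A (B ⧸ J)) :=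
      Module.compHom _ (algebraMap B (B ⧸ J))
    (∃ b : Module.Basis (Fin xs.length) (B ⧸ J) (Ideal.ofList xs).Cotangent,
        ∀ i : Fin xs.length,
          b i = (Ideal.ofList xs).toCotangent
            ⟨xs[i], Ideal.subset_span (List.getElem_mem i.isLt)⟩) ∧
      Nonempty (Algebra.H1Cotangent A (B ⧸ J) ≃ₗ[B]
        LinearMap.ker (KaehlerDifferential.kerCotangentToTensor A B (B ⧸ J))) :=
  stmt8_general xs hreg.toIsWeaklyRegular
end

section
/- Let A be a Noetherian commutative ring and I ⊆ A an ideal. Let M be an arbitrary A-module with I-adic completion Λ_I M, and let N be an A-module which is I-adically complete (complete and separated). Then precomposition with the canonical map M → Λ_I M defines a bijection Hom_A(Λ_I M, N) → Hom_A(M, N). -/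
/-!
When `I` is finitely generated, `I ^ n • Λ_I M` is the kernel of `Λ_I M → M / I ^ n M`, so the image
of `M` is dense in `Λ_I M` for the `I`-adic topology. Linear maps are automatically `I`-adically
continuous, hence a map from `Λ_I M` to a separated module is determined by its restriction to `M`.
Conversely, `f : M → N` extends to `Λ_I f : Λ_I M → Λ_I N`, and `Λ_I N = N` when `N` is complete.
-/

section

variable {R M N : Type*} [CommRing R] [AddCommGroup M] [Module R M] [AddCommGroup N] [Module R N]

theorem linearMap_eq_zero_of_le_ker_of_sup_pow_smul_top {I : Ideal R} [IsHausdorff I N]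
    {D : Submodule R M} (hD : ∀ n : ℕ, D ⊔ I ^ n • ⊤ = ⊤) {f : M →ₗ[R] N}
    (hf : D ≤ LinearMap.ker f) : f = 0 := by
  have range_le (n : ℕ) : LinearMap.range f ≤ I ^ n • ⊤ :=
    calc LinearMap.range f = (D ⊔ I ^ n • ⊤).map f := by rw [hD, LinearMap.range_eq_map]
      _ = I ^ n • (⊤ : Submodule R M).map f := by
        rw [Submodule.map_sup, LinearMap.le_ker_iff_map.mp hf, bot_sup_eq, Submodule.map_smul'']
      _ ≤ I ^ n • ⊤ := smul_mono_right _ le_top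
  rw [← LinearMap.range_eq_bot, eq_bot_iff, ← IsHausdorff.iInf_pow_smul ‹IsHausdorff I N›]
  exact le_iInf range_le

variable (M) in
theorem range_adicCompletion_of_sup_pow_smul_top {I : Ideal R} (hI : I.FG) (n : ℕ) :
    LinearMap.range (AdicCompletion.of I M) ⊔ I ^ n • ⊤ = ⊤ := by
  rw [AdicCompletion.pow_smul_top_eq_ker_eval hI, ← Submodule.comap_map_eq, ← LinearMap.range_comp,
    AdicCompletion.eval_comp_of, Submodule.range_mkQ, Submodule.comap_top]

variable (M N) in
theorem comp_adicCompletion_of_injective {I : Ideal R} (hI : I.FG) [IsHausdorff I N] :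
    Function.Injective
      (fun f : AdicCompletion I M →ₗ[R] N => f ∘ₗ AdicCompletion.of I M) := by
  intro f g hfg
  refine sub_eq_zero.mp (linearMap_eq_zero_of_le_ker_of_sup_pow_smul_top
    (range_adicCompletion_of_sup_pow_smul_top M hI) ?_)
  rw [LinearMap.range_le_ker_iff, LinearMap.sub_comp]
  exact sub_eq_zero.mpr hfg

/-- The extension to `Λ_I M` of a linear map from `M` to an `I`-adically complete module `N`,
encoded as `Λ_I f` followed by the inverse of the canonical isomorphism `N ≃ Λ_I N`. -/
noncomputable def adicCompletionExtend (I : Ideal R) [IsAdicComplete I N] (f : M →ₗ[R] N) :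
    AdicCompletion I M →ₗ[R] N :=
  (AdicCompletion.ofLinearEquiv I N).symm.toLinearMap ∘ₗ
    (AdicCompletion.map I f).restrictScalars R

theorem adicCompletionExtend_comp_of (I : Ideal R) [IsAdicComplete I N] (f : M →ₗ[R] N) :
    adicCompletionExtend I f ∘ₗ AdicCompletion.of I M = f := by
  ext m
  simp [adicCompletionExtend, AdicCompletion.map_of]

end

theorem stmt9_general {R M N : Type*} [CommRing R] [AddCommGroup M] [Module R M]
    [AddCommGroup N] [Module R N] {I : Ideal R} (hI : I.FG) [IsAdicComplete I N] :
    Function.Bijective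
      (fun f : AdicCompletion I M →ₗ[R] N => f ∘ₗ AdicCompletion.of I M) :=
  ⟨comp_adicCompletion_of_injective M N hI,
    fun f => ⟨adicCompletionExtend I f, adicCompletionExtend_comp_of I f⟩⟩

/-- Let `A` be a noetherian commutative ring, `I ⊆ A` an ideal, `M` an arbitrary `A`-module and
`N` an `I`-adically complete `A`-module. Then precomposition with the canonical map
`M → Λ_I M` is a bijection `Hom_A(Λ_I M, N) → Hom_A(M, N)`. -/
theorem stmt9 {A : Type} [CommRing A] [IsNoetherianRing A] (I : Ideal A)
    (M N : Type) [AddCommGroup M] [Module A M] [AddCommGroup N] [Module A N]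
    [IsAdicComplete I N] :
    Function.Bijective
      (fun f : AdicCompletion I M →ₗ[A] N => f ∘ₗ AdicCompletion.of I M) :=
  stmt9_general (IsNoetherian.noetherian I)
end

section
/- Let A be a Noetherian commutative ring which is complete and separated for the I-adic topology of an ideal I ⊆ A. Let B = A[[Y₁, …, Y_m]] be the formal power series ring in m variables over A, and let J ⊆ B be the ideal generated by the image of I together with Y₁, …, Y_m. Then the J-adic completion of the module of Kähler differentials Ω_{B/A} is a free B-module of rank m, with basis given by the images of d_{B/A}(Y₁), …, d_{B/A}(Y_m). -/
/-! Every power series has the form `a + ∑ i, Yᵢ gᵢ`. Applied repeatedly, this shows that a linear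
map out of `Ω_{B/A}` killing every `dYᵢ` takes its values in `⋂ₙ Jⁿ • ⊤`, hence induces zero on
`J`-adic completions. Therefore the maps `b ↦ ∑ i, bᵢ dYᵢ` and `df ↦ (∂f/∂Yᵢ)ᵢ` between `Bᵐ` and
`Ω_{B/A}`, whose composite on `Bᵐ` is the identity, induce mutually inverse maps on completions. The
same decomposition shows that `f ∈ Jⁿ` iff the coefficient of `f` at each exponent `α` lies in
`I ^ (n - |α|)`, so `B` inherits `J`-adic completeness from the `I`-adic completeness of `A`, and
the completion of `Bᵐ` is `Bᵐ` itself. -/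

open MvPowerSeries KaehlerDifferential

section AdicCompletion

variable {R : Type*} [CommRing R] (I : Ideal R)

theorem adicCompletion_map_congr {M N : Type*} [AddCommGroup M] [Module R M] [AddCommGroup N]
    [Module R N] {f g : M →ₗ[R] N} (h : ∀ n x, f x - g x ∈ (I ^ n • ⊤ : Submodule R N)) :
    AdicCompletion.map I f = AdicCompletion.map I g := by
  refine AdicCompletion.map_ext' I fun a ↦ AdicCompletion.ext fun n ↦ ?_
  exact (Submodule.Quotient.eq _).2 (h n (a n))

theorem isAdicComplete_pi {ι : Type*} [Finite ι] (M : ι → Type*) [∀ i, AddCommGroup (M i)]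
    [∀ i, Module R (M i)] [∀ i, IsAdicComplete I (M i)] : IsAdicComplete I (∀ i, M i) := by
  classical
  cases nonempty_fintype ι
  have piEquiv_comp_of : AdicCompletion.piEquivOfFintype I M ∘ AdicCompletion.of I (∀ i, M i) =
      Pi.map fun i ↦ AdicCompletion.of I (M i) := by
    ext x i n
    simp [AdicCompletion.piEquivOfFintype_apply, AdicCompletion.pi]
  rw [← AdicCompletion.of_bijective_iff,
    ← (AdicCompletion.piEquivOfFintype I M).bijective.of_comp_iff', piEquiv_comp_of]
  exact Function.Bijective.piMap fun i ↦ AdicCompletion.of_bijective I (M i)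

end AdicCompletion

namespace FormalDisc

variable {σ A : Type*} [CommRing A]

theorem exists_eq_C_add_sum_X_mul [Fintype σ] (f : MvPowerSeries σ A) :
    ∃ g : σ → MvPowerSeries σ A, f = C (constantCoeff f) + ∑ i, X i * g i ∧
      ∀ i β, coeff β (g i) = 0 ∨ coeff β (g i) = coeff (β + Finsupp.single i 1) f := by
  classical
  have exists_ne_zero (α : σ →₀ ℕ) (hα : α ≠ 0) : ∃ i, α i ≠ 0 := Finsupp.ne_iff.1 hα
  -- Sort the nonconstant monomials of `f` by a chosen variable `c α` dividing each of them.
  choose c hc using exists_ne_zero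
  let part (i : σ) : MvPowerSeries σ A := fun α ↦ if ∃ hα, c α hα = i then coeff α f else 0
  have coeff_part (i α) : coeff α (part i) = if ∃ hα, c α hα = i then coeff α f else 0 := rfl
  have X_dvd_part (i) : X i ∣ part i := by
    refine X_dvd_iff.2 fun α hαi ↦ (coeff_part i α).trans (if_neg ?_)
    rintro ⟨hα, rfl⟩
    exact hc α hα hαi
  choose g hg using X_dvd_part
  refine ⟨g, ?_, fun i β ↦ ?_⟩
  · ext α
    simp only [← hg, map_add, map_sum, coeff_part, coeff_C]
    by_cases hα : α = 0 <;> simp [hα]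
  · have coeff_g : coeff β (g i) = coeff (β + Finsupp.single i 1) (part i) := by
      rw [hg, add_comm, X, coeff_add_monomial_mul, one_mul]
    rw [coeff_g, coeff_part]
    split_ifs
    exacts [.inr rfl, .inl rfl]

section Ideal

variable (σ) in
/-- The ideal of definition of the formal disc `Spf A[[X]]` over `Spf A`, where `A` carries the
`I`-adic topology: the ideal `J` generated by `I` and the variables. -/
noncomputable def idealOfDefinition (I : Ideal A) : Ideal (MvPowerSeries σ A) :=
  I.map (algebraMap A (MvPowerSeries σ A)) ⊔ Ideal.span (Set.range X)

variable {I : Ideal A}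

theorem X_mem_idealOfDefinition (i : σ) : X i ∈ idealOfDefinition σ I :=
  Ideal.mem_sup_right (Ideal.subset_span ⟨i, rfl⟩)

theorem C_mem_idealOfDefinition_pow {n : ℕ} {a : A} (ha : a ∈ I ^ n) :
    C a ∈ idealOfDefinition σ I ^ n := by
  have := Ideal.mem_map_of_mem (algebraMap A (MvPowerSeries σ A)) ha
  rw [Ideal.map_pow] at this
  exact Ideal.pow_right_mono le_sup_left n this

theorem constantCoeff_mem_of_mem_idealOfDefinition {f : MvPowerSeries σ A}
    (hf : f ∈ idealOfDefinition σ I) : constantCoeff f ∈ I := by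
  suffices idealOfDefinition σ I ≤ I.comap constantCoeff from this hf
  refine sup_le (Ideal.map_le_iff_le_comap.2 fun a ha ↦ ?_) (Ideal.span_le.2 ?_)
  · simpa [← c_eq_algebraMap] using ha
  · rintro _ ⟨i, rfl⟩
    simp

theorem coeff_mem_pow_of_mem_idealOfDefinition_pow {n : ℕ} {f : MvPowerSeries σ A}
    (hf : f ∈ idealOfDefinition σ I ^ n) (α : σ →₀ ℕ) : coeff α f ∈ I ^ (n - α.degree) := by
  classical
  induction n generalizing f α with
  | zero => simp
  | succ n ih =>
    rw [pow_succ'] at hf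
    induction hf using Submodule.mul_induction_on' with
    | add x _ y _ hx hy => simpa only [map_add] using add_mem hx hy
    | mem_mul_mem x hx y hy =>
      rw [coeff_mul]
      refine Ideal.sum_mem _ fun ⟨β, γ⟩ hβγ ↦ ?_
      obtain rfl : β + γ = α := Finset.HasAntidiagonal.mem_antidiagonal.1 hβγ
      rw [map_add]
      obtain rfl | hβ := eq_or_ne β 0
      · have := Ideal.mul_mem_mul (constantCoeff_mem_of_mem_idealOfDefinition hx) (ih hy γ)
        rw [← pow_succ'] at this
        exact Ideal.pow_le_pow_right (by simp; omega) this
      · have : β.degree ≠ 0 := (Finsupp.degree_eq_zero_iff β).not.2 hβ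
        exact Ideal.mul_mem_left _ _ (Ideal.pow_le_pow_right (by omega) (ih hy γ))

theorem mem_idealOfDefinition_pow_iff [Finite σ] {n : ℕ} {f : MvPowerSeries σ A} :
    f ∈ idealOfDefinition σ I ^ n ↔ ∀ α : σ →₀ ℕ, coeff α f ∈ I ^ (n - α.degree) := by
  refine ⟨coeff_mem_pow_of_mem_idealOfDefinition_pow, fun hf ↦ ?_⟩
  cases nonempty_fintype σ
  induction n generalizing f with
  | zero => simp
  | succ n ih =>
    obtain ⟨g, hfg, hg⟩ := exists_eq_C_add_sum_X_mul f
    have g_mem (i) : g i ∈ idealOfDefinition σ I ^ n := by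
      refine ih fun β ↦ ?_
      obtain h | h := hg i β <;> rw [h]
      · exact zero_mem _
      · have := hf (β + Finsupp.single i 1)
        rwa [map_add Finsupp.degree, Finsupp.degree_single, Nat.add_sub_add_right] at this
    rw [hfg]
    refine add_mem (C_mem_idealOfDefinition_pow (by simpa using hf 0)) (sum_mem fun i _ ↦ ?_)
    rw [pow_succ']
    exact Ideal.mul_mem_mul (X_mem_idealOfDefinition i) (g_mem i)

theorem smodEq_idealOfDefinition_pow_iff [Finite σ] {n : ℕ} {f g : MvPowerSeries σ A} :
    f ≡ g [SMOD (idealOfDefinition σ I ^ n • ⊤ : Ideal (MvPowerSeries σ A))] ↔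
      ∀ α : σ →₀ ℕ, coeff α f ≡ coeff α g [SMOD (I ^ (n - α.degree) • ⊤ : Ideal A)] := by
  simp only [SModEq.sub_mem, smul_eq_mul, Ideal.mul_top, mem_idealOfDefinition_pow_iff, map_sub]

variable (I)

instance isHausdorff_idealOfDefinition [Finite σ] [IsHausdorff I A] :
    IsHausdorff (idealOfDefinition σ I) (MvPowerSeries σ A) where
  haus' f hf := by
    ext α
    refine IsHausdorff.haus ‹IsHausdorff I A› _ fun n ↦ ?_
    simpa using smodEq_idealOfDefinition_pow_iff.1 (hf (n + α.degree)) α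

instance isPrecomplete_idealOfDefinition [Finite σ] [IsPrecomplete I A] :
    IsPrecomplete (idealOfDefinition σ I) (MvPowerSeries σ A) where
  prec' f hf := by
    have exists_coeff_limit (α : σ →₀ ℕ) :
        ∃ l, ∀ n, coeff α (f (n + α.degree)) ≡ l [SMOD (I ^ n • ⊤ : Ideal A)] := by
      refine IsPrecomplete.prec ‹IsPrecomplete I A› fun {m n} hmn ↦ ?_
      simpa using smodEq_idealOfDefinition_pow_iff.1 (hf (Nat.add_le_add_right hmn α.degree)) α
    choose l hl using exists_coeff_limit
    refine ⟨(l : MvPowerSeries σ A), fun n ↦ smodEq_idealOfDefinition_pow_iff.2 fun α ↦ ?_⟩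
    obtain h | h := le_total α.degree n
    · have := hl α (n - α.degree)
      rwa [Nat.sub_add_cancel h] at this
    · simp [Nat.sub_eq_zero_of_le h]

instance isAdicComplete_idealOfDefinition [Finite σ] [IsAdicComplete I A] :
    IsAdicComplete (idealOfDefinition σ I) (MvPowerSeries σ A) where

end Ideal

section KaehlerDifferential

variable {J : Ideal (MvPowerSeries σ A)} {M : Type*} [AddCommGroup M] [Module (MvPowerSeries σ A) M]

theorem linearMap_D_mem_pow_smul_top [Finite σ] (hJ : ∀ i, X i ∈ J)
    {T : Ω[MvPowerSeries σ A⁄A] →ₗ[MvPowerSeries σ A] M} (hT : ∀ i, T (D A _ (X i)) = 0)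
    (n : ℕ) (f : MvPowerSeries σ A) :
    T (D A _ f) ∈ (J ^ n • ⊤ : Submodule (MvPowerSeries σ A) M) := by
  cases nonempty_fintype σ
  induction n generalizing f with
  | zero => simp
  | succ n ih =>
    obtain ⟨g, hfg, -⟩ := exists_eq_C_add_sum_X_mul f
    have leibniz_sum : T (D A _ f) = ∑ i, (X i : MvPowerSeries σ A) • T (D A _ (g i)) := by
      rw [hfg, c_eq_algebraMap]
      simp [hT]
    rw [leibniz_sum, pow_succ', Submodule.mul_smul]
    exact sum_mem fun i _ ↦ Submodule.smul_mem_smul (hJ i) (ih (g i))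

theorem adicCompletion_map_kaehler_ext [Finite σ] (hJ : ∀ i, X i ∈ J)
    {S T : Ω[MvPowerSeries σ A⁄A] →ₗ[MvPowerSeries σ A] M}
    (h : ∀ i, S (D A _ (X i)) = T (D A _ (X i))) :
    AdicCompletion.map J S = AdicCompletion.map J T := by
  refine adicCompletion_map_congr J fun n w ↦ ?_
  suffices ⊤ ≤ (J ^ n • ⊤ : Submodule _ M).comap (S - T) from this (Submodule.mem_top (x := w))
  rw [← span_range_derivation, Submodule.span_le]
  rintro _ ⟨f, rfl⟩
  exact linearMap_D_mem_pow_smul_top hJ (fun i ↦ by simp [h i]) n f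

variable (σ A) in
/-- The `B`-linear map `Ω_{B/A} → B^σ`, `df ↦ (∂f/∂Xᵢ)ᵢ`, where `B = A[[X]]`. -/
noncomputable def partials : Ω[MvPowerSeries σ A⁄A] →ₗ[MvPowerSeries σ A] σ → MvPowerSeries σ A :=
  LinearMap.pi fun i ↦ (pderiv A i).liftKaehlerDifferential

variable (σ A) in
/-- The `B`-linear map `B^σ → Ω_{B/A}`, `b ↦ ∑ i, bᵢ dXᵢ`, where `B = A[[X]]`; it becomes an
isomorphism after completion. -/
noncomputable def dXCombination [Fintype σ] :
    (σ → MvPowerSeries σ A) →ₗ[MvPowerSeries σ A] Ω[MvPowerSeries σ A⁄A] :=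
  Fintype.linearCombination _ fun i ↦ D A _ (X i)

theorem dXCombination_single [Fintype σ] [DecidableEq σ] (i : σ) :
    dXCombination σ A (Pi.single i 1) = D A _ (X i) := by
  rw [dXCombination, Fintype.linearCombination_apply_single, one_smul]

theorem partials_D_X [DecidableEq σ] (i : σ) :
    partials σ A (D A _ (X i)) = Pi.single i 1 := by
  ext1 j
  obtain rfl | hij := eq_or_ne i j
  · simp [partials, pderiv_X_self]
  · simp [partials, pderiv_X_of_ne hij, hij.symm]

theorem partials_comp_dXCombination [Fintype σ] : partials σ A ∘ₗ dXCombination σ A = .id := by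
  classical
  refine LinearMap.pi_ext' fun i ↦ LinearMap.ext_ring ?_
  simp only [LinearMap.comp_apply, LinearMap.coe_single, dXCombination_single, partials_D_X,
    LinearMap.id_apply]

theorem map_dXCombination_comp_map_partials [Fintype σ] (hJ : ∀ i, X i ∈ J) :
    AdicCompletion.map J (dXCombination σ A) ∘ₗ AdicCompletion.map J (partials σ A) = .id := by
  classical
  rw [AdicCompletion.map_comp, ← AdicCompletion.map_id]
  refine adicCompletion_map_kaehler_ext hJ fun i ↦ ?_
  rw [LinearMap.comp_apply, partials_D_X, dXCombination_single, LinearMap.id_apply]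

/-- The isomorphism from the `J`-adic completion of `B^σ` to that of `Ω_{B/A}` induced by
`dXCombination`, for any ideal `J` containing the variables. -/
noncomputable def completedKaehlerEquiv [Fintype σ] (hJ : ∀ i, X i ∈ J) :
    AdicCompletion J (σ → MvPowerSeries σ A) ≃ₗ[AdicCompletion J (MvPowerSeries σ A)]
      AdicCompletion J Ω[MvPowerSeries σ A⁄A] :=
  .ofLinearMap (AdicCompletion.map J (dXCombination σ A)) (AdicCompletion.map J (partials σ A))
    (map_dXCombination_comp_map_partials hJ)
    (by rw [AdicCompletion.map_comp, partials_comp_dXCombination, AdicCompletion.map_id])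

/-- The basis `(dXᵢ)ᵢ` of the `J`-adically completed module of differentials over `B = A[[X]]`, for
any ideal `J` containing the variables for which `B` is complete. -/
noncomputable def completedKaehlerBasis [Fintype σ] [IsAdicComplete J (MvPowerSeries σ A)]
    (hJ : ∀ i, X i ∈ J) :
    Module.Basis σ (MvPowerSeries σ A) (AdicCompletion J Ω[MvPowerSeries σ A⁄A]) :=
  haveI := isAdicComplete_pi J fun _ : σ ↦ MvPowerSeries σ A
  (Pi.basisFun (MvPowerSeries σ A) σ).map
    (AdicCompletion.ofLinearEquiv J (σ → MvPowerSeries σ A) ≪≫ₗ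
      (completedKaehlerEquiv hJ).restrictScalars (MvPowerSeries σ A))

theorem completedKaehlerBasis_apply [Fintype σ] [IsAdicComplete J (MvPowerSeries σ A)]
    (hJ : ∀ i, X i ∈ J) (i : σ) :
    completedKaehlerBasis hJ i = AdicCompletion.of J _ (D A _ (X i)) := by
  classical
  suffices AdicCompletion.map J (dXCombination σ A) (AdicCompletion.of J _ (Pi.single i 1)) =
      AdicCompletion.of J _ (D A _ (X i)) by
    simpa [completedKaehlerBasis, completedKaehlerEquiv] using this
  rw [AdicCompletion.map_of, dXCombination_single]

end KaehlerDifferential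

end FormalDisc

theorem stmt10_general {σ A : Type*} [Finite σ] [CommRing A] (I : Ideal A) [IsAdicComplete I A] :
    ∃ b : Module.Basis σ (MvPowerSeries σ A)
        (AdicCompletion (FormalDisc.idealOfDefinition σ I) Ω[MvPowerSeries σ A⁄A]),
      ∀ i, b i = AdicCompletion.of (FormalDisc.idealOfDefinition σ I) _ (D A _ (X i)) := by
  cases nonempty_fintype σ
  exact ⟨FormalDisc.completedKaehlerBasis FormalDisc.X_mem_idealOfDefinition,
    FormalDisc.completedKaehlerBasis_apply FormalDisc.X_mem_idealOfDefinition⟩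

/-- Let `A` be a noetherian commutative ring, complete and separated for the `I`-adic topology.
Let `B = A[[Y₁, …, Y_m]]` and let `J ⊆ B` be the ideal generated by the image of `I` together
with the variables `Y₁, …, Y_m`. Then the `J`-adic completion of `Ω_{B/A}` is a free `B`-module
of rank `m`, with basis the images of `d Y₁, …, d Y_m`. -/
theorem stmt10 {A : Type} [CommRing A] [IsNoetherianRing A] (I : Ideal A)
    [IsAdicComplete I A] (m : ℕ) :
    letI B := MvPowerSeries (Fin m) A
    letI J : Ideal B :=
      I.map (algebraMap A B) ⊔ Ideal.span (Set.range (MvPowerSeries.X (σ := Fin m) (R := A)))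
    ∃ b : Module.Basis (Fin m) B (AdicCompletion J (KaehlerDifferential A B)),
      ∀ i : Fin m,
        b i = AdicCompletion.of J (KaehlerDifferential A B)
          (KaehlerDifferential.D A B (MvPowerSeries.X i)) :=
  stmt10_general I
end

section
/- Let A be a Noetherian commutative ring, I ⊆ A an ideal, and M a flat A-module. Then the I-adic completion Λ_I M is a flat A-module. -/
/-!
For submodules `K` and `L` of `N` and an ideal `J`, tensoring with a flat module `M` turns `J • K`
and `K ⊓ L` into the corresponding submodules of `M ⊗ N`. Hence an Artin–Rees bound for `K ⊆ N`
carries over to the image of `M ⊗ K` in `M ⊗ N`, even though `M ⊗ N` need not be finitely generated.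
So, over a noetherian ring, `N ↦ Λ_I (M ⊗ N)` is exact on finitely generated modules, and by the
five lemma it agrees there with `N ↦ Λ_I M ⊗ N`. The latter therefore preserves the injectivity of
inclusions of ideals, which is flatness of `Λ_I M`.
-/

open TensorProduct

section ArtinRees

variable {R M N P : Type*} [CommRing R] [AddCommGroup M] [Module R M]
  [AddCommGroup N] [Module R N] [AddCommGroup P] [Module R P] {I : Ideal R}

/-- The Artin–Rees property of a submodule `N` of `M`: up to a shift by a constant, the filtration
induced on `N` by the `I`-adic filtration of `M` is contained in the `I`-adic filtration of `N`.
It makes `I`-adic completion exact along `N ⊆ M`. Both filtrations are encoded by submodules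
of `M`. -/
def IsArtinRees (I : Ideal R) (N : Submodule R M) : Prop :=
  ∃ c : ℕ, ∀ k, I ^ (k + c) • ⊤ ⊓ N ≤ I ^ k • N

theorem isArtinRees_of_finite [IsNoetherianRing R] [Module.Finite R M] (I : Ideal R)
    (N : Submodule R M) : IsArtinRees I N := by
  obtain ⟨c, hc⟩ := I.exists_pow_inf_eq_pow_smul N
  refine ⟨c, fun k ↦ ?_⟩
  rw [hc _ (Nat.le_add_left c k), Nat.add_sub_cancel]
  exact smul_mono_right _ inf_le_right

variable (M) in
theorem range_lTensor_subtype_smul (J : Ideal R) (K : Submodule R N) :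
    LinearMap.range ((J • K).subtype.lTensor M) =
      J • LinearMap.range (K.subtype.lTensor M) := by
  simp only [LinearMap.lTensor, TensorProduct.range_map, Submodule.range_subtype]
  apply le_antisymm
  · refine Submodule.map₂_le.2 fun m hm n hn ↦ ?_
    have hmk : K.map (mk R M N m) ≤ Submodule.map₂ (mk R M N) LinearMap.id.range K :=
      Submodule.map_le_iff_le_comap.2 fun _ ↦ Submodule.apply_mem_map₂ _ hm
    have hmn := Submodule.mem_map_of_mem (f := mk R M N m) hn
    rw [Submodule.map_smul''] at hmn
    exact smul_mono_right J hmk hmn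
  · refine Submodule.smul_le.2 fun r hr t ht ↦ ?_
    suffices Submodule.map₂ (mk R M N) LinearMap.id.range K ≤
        (Submodule.map₂ (mk R M N) LinearMap.id.range (J • K)).comap (LinearMap.lsmul R _ r) from
      this ht
    refine Submodule.map₂_le.2 fun m hm n hn ↦ ?_
    simpa using Submodule.apply_mem_map₂ (mk R M N) hm (Submodule.smul_mem_smul hr hn)

variable (M) in
theorem range_lTensor_subtype_mono {K L : Submodule R N} (h : K ≤ L) :
    LinearMap.range (K.subtype.lTensor M) ≤ LinearMap.range (L.subtype.lTensor M) := by
  rw [← Submodule.subtype_comp_inclusion K L h, LinearMap.lTensor_comp]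
  exact LinearMap.range_comp_le_range _ _

variable (M) in
theorem range_lTensor_subtype_inf [Module.Flat R M] (K L : Submodule R N) :
    LinearMap.range ((K ⊓ L).subtype.lTensor M) =
      LinearMap.range (K.subtype.lTensor M) ⊓ LinearMap.range (L.subtype.lTensor M) := by
  refine le_antisymm (le_inf (range_lTensor_subtype_mono M inf_le_left)
    (range_lTensor_subtype_mono M inf_le_right)) ?_
  rintro _ ⟨⟨s, rfl⟩, hL⟩
  let f := L.mkQ ∘ₗ K.subtype
  have hs : f.lTensor M s = 0 := by
    rw [LinearMap.lTensor_comp_apply]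
    exact (lTensor_exact M (LinearMap.exact_subtype_mkQ L) L.mkQ_surjective _).2 hL
  obtain ⟨t, rfl⟩ := (Module.Flat.lTensor_exact M (LinearMap.exact_subtype_ker_map f) s).1 hs
  have hrange : LinearMap.range (K.subtype ∘ₗ (LinearMap.ker f).subtype) = K ⊓ L := by
    rw [LinearMap.range_comp, Submodule.range_subtype, LinearMap.ker_comp, Submodule.ker_mkQ,
      Submodule.map_comap_subtype]
  rw [← LinearMap.lTensor_comp_apply, ← hrange, ← LinearMap.lTensor_range]
  exact LinearMap.mem_range_self _ t

variable (M) in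
theorem IsArtinRees.range_lTensor [Module.Flat R M] {f : P →ₗ[R] N}
    (hf : IsArtinRees I (LinearMap.range f)) :
    IsArtinRees I (LinearMap.range (f.lTensor M)) := by
  obtain ⟨c, hc⟩ := hf
  refine ⟨c, fun k ↦ ?_⟩
  have htop : (⊤ : Submodule R (M ⊗[R] N)) =
      LinearMap.range ((⊤ : Submodule R N).subtype.lTensor M) :=
    (LinearMap.range_eq_top.2 (LinearMap.lTensor_surjective M fun n ↦ ⟨⟨n, trivial⟩, rfl⟩)).symm
  rw [LinearMap.lTensor_range, htop, ← range_lTensor_subtype_smul, ← range_lTensor_subtype_smul,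
    ← range_lTensor_subtype_inf]
  exact range_lTensor_subtype_mono M (hc k)

theorem IsArtinRees.map_injective {f : M →ₗ[R] N} (hAR : IsArtinRees I (LinearMap.range f))
    (hf : Function.Injective f) : Function.Injective (AdicCompletion.map I f) := by
  obtain ⟨c, hc⟩ := hAR
  refine (injective_iff_map_eq_zero _).2 fun x hx ↦ ?_
  obtain ⟨a, rfl⟩ := AdicCompletion.mk_surjective I M x
  refine AdicCompletion.mk_zero_of I M a ⟨0, fun k _ ↦ ⟨k + c, by lia, k, le_rfl, ?_⟩⟩
  have hfa : f (a (k + c)) ∈ (I ^ (k + c) • ⊤ : Submodule R N) := by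
    simpa using congrArg (fun x ↦ x.val (k + c)) hx
  have hmem := hc k ⟨hfa, LinearMap.mem_range_self f _⟩
  rw [← Submodule.map_top, ← Submodule.map_smul''] at hmem
  obtain ⟨m, hm, hfm⟩ := hmem
  exact hf hfm ▸ hm

open AdicCompletion in
theorem IsArtinRees.mk_mem_range_map_subtype {K : Submodule R M} (hK : IsArtinRees I K)
    {a : AdicCauchySequence I M}
    (ha : ∀ k, ∃ y ∈ K, a k ≡ y [SMOD (I ^ k • ⊤ : Submodule R M)]) :
    mk I M a ∈ LinearMap.range (map I K.subtype) := by
  obtain ⟨c, hc⟩ := hK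
  choose y hyK hy using ha
  have hay {m n : ℕ} (hmn : m ≤ n) : a m ≡ y n [SMOD (I ^ m • ⊤ : Submodule R M)] :=
    (a.property hmn).trans ((hy n).mono (Submodule.pow_smul_top_le I M hmn))
  -- `y` is Cauchy only in `M`; the shift by `c` makes it Cauchy for the `I`-adic topology of `K`.
  let z : AdicCauchySequence I K := .mk I K (fun k ↦ ⟨y (k + c), hyK _⟩) fun k ↦ by
    have hyy := (hy (k + c)).symm.trans (hay (n := k + 1 + c) (by lia))
    rw [SModEq.sub_mem] at hyy ⊢
    rw [Submodule.mem_smul_top_iff]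
    exact hc k ⟨hyy, sub_mem (hyK _) (hyK _)⟩
  exact ⟨mk I K z, AdicCompletion.ext fun k ↦ (hay (Nat.le_add_right k c)).symm⟩

open AdicCompletion in
theorem IsArtinRees.map_exact {f : M →ₗ[R] N} {g : N →ₗ[R] P}
    (hf : IsArtinRees I (LinearMap.range f)) (hfg : Function.Exact f g)
    (hg : Function.Surjective g) : Function.Exact (map I f) (map I g) := by
  refine LinearMap.exact_of_comp_of_mem_range ?_ fun x hx ↦ ?_
  · rw [AdicCompletion.map_comp, hfg.linearMap_comp_eq_zero, AdicCompletion.map_zero]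
  obtain ⟨a, rfl⟩ := mk_surjective I N x
  have ha (k : ℕ) : ∃ y ∈ LinearMap.range f, a k ≡ y [SMOD (I ^ k • ⊤ : Submodule R N)] := by
    have hga : g (a k) ∈ (I ^ k • ⊤ : Submodule R N).map g := by
      rw [Submodule.map_smul'', Submodule.map_top, LinearMap.range_eq_top.2 hg]
      simpa using congrArg (fun x ↦ x.val k) hx
    obtain ⟨n, hn, hgn⟩ := hga
    exact ⟨a k - n, (hfg _).1 (by rw [map_sub, hgn, sub_self]),
      SModEq.sub_mem.2 (by rwa [sub_sub_cancel])⟩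
  obtain ⟨y, hy⟩ := hf.mk_mem_range_map_subtype ha
  obtain ⟨z, rfl⟩ := map_surjective I f.surjective_rangeRestrict y
  refine ⟨z, ?_⟩
  rw [← hy, map_comp_apply, LinearMap.subtype_comp_codRestrict]

end ArtinRees

section Comparison

variable {R : Type*} [CommRing R] (I : Ideal R) (M : Type*) [AddCommGroup M] [Module R M]
  {N P : Type*} [AddCommGroup N] [Module R N] [AddCommGroup P] [Module R P]

variable (N) in
/-- The comparison map `Λ_I M ⊗ N → Λ_I (M ⊗ N)`, which sends `x ⊗ n` to the image of `x` under the
completion of `m ↦ m ⊗ n`. It is kept `R`-linear, the linearity in which flatness of `Λ_I M` over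
`R` is tested. -/
noncomputable def adicCompletionTensor :
    AdicCompletion I M ⊗[R] N →ₗ[R] AdicCompletion I (M ⊗[R] N) :=
  TensorProduct.lift (LinearMap.mk₂ R (fun x n ↦ AdicCompletion.map I ((mk R M N).flip n) x)
    (fun x y n ↦ map_add _ x y) (fun r x n ↦ LinearMap.map_smul_of_tower _ r x)
    (fun x m n ↦ by
      induction x using AdicCompletion.induction_on with | h a =>
      exact AdicCompletion.ext fun k ↦ congrArg _ (tmul_add (a k) m n))
    (fun r x n ↦ by
      induction x using AdicCompletion.induction_on with | h a =>
      exact AdicCompletion.ext fun k ↦ congrArg _ (tmul_smul r (a k) n)))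

theorem map_lTensor_adicCompletionTensor (f : N →ₗ[R] P) (t : AdicCompletion I M ⊗[R] N) :
    AdicCompletion.map I (f.lTensor M) (adicCompletionTensor I M N t) =
      adicCompletionTensor I M P (f.lTensor (AdicCompletion I M) t) := by
  induction t with
  | zero => simp
  | add s t hs ht => simp only [map_add, hs, ht]
  | tmul x n => exact AdicCompletion.map_comp_apply I ((mk R M N).flip n) (f.lTensor M) x

theorem adicCompletionTensor_pi_bijective (ι : Type*) [Finite ι] :
    Function.Bijective (adicCompletionTensor I M (ι → R)) := by
  classical
  have := Fintype.ofFinite ι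
  let e : AdicCompletion I (M ⊗[R] (ι → R)) ≃ₗ[R] (ι → AdicCompletion I M) :=
    ((AdicCompletion.congr I (piScalarRight R R M ι)).trans
      (AdicCompletion.piEquivOfFintype I fun _ : ι ↦ M)).restrictScalars R
  have he : e.toLinearMap ∘ₗ adicCompletionTensor I M (ι → R) =
      (piScalarRight R R (AdicCompletion I M) ι).toLinearMap := by
    refine TensorProduct.ext' fun x r ↦ ?_
    induction x using AdicCompletion.induction_on with | h a =>
    ext i k
    rfl
  rw [← e.bijective.of_comp_iff', ← LinearEquiv.coe_toLinearMap, ← LinearMap.coe_comp, he]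
  exact (piScalarRight R R (AdicCompletion I M) ι).bijective

theorem adicCompletionTensor_surjective [Module.Finite R N] :
    Function.Surjective (adicCompletionTensor I M N) := by
  obtain ⟨n, f, hf⟩ := Module.Finite.exists_fin' R N
  intro y
  obtain ⟨x, rfl⟩ := AdicCompletion.map_surjective I (LinearMap.lTensor_surjective M hf) y
  obtain ⟨t, rfl⟩ := (adicCompletionTensor_pi_bijective I M (Fin n)).2 x
  exact ⟨f.lTensor _ t, (map_lTensor_adicCompletionTensor I M f t).symm⟩

theorem adicCompletionTensor_bijective [IsNoetherianRing R] [Module.Flat R M]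
    [Module.Finite R N] : Function.Bijective (adicCompletionTensor I M N) := by
  obtain ⟨n, f, hf⟩ := Module.Finite.exists_fin' R N
  let K := LinearMap.ker f
  have hexact : Function.Exact K.subtype f := LinearMap.exact_subtype_ker_map f
  have hAR : IsArtinRees I (LinearMap.range (K.subtype.lTensor M)) :=
    (isArtinRees_of_finite I _).range_lTensor M
  have hmapf := LinearMap.lTensor_surjective M hf
  exact LinearMap.bijective_of_surjective_of_bijective_of_right_exact
    (K.subtype.lTensor (AdicCompletion I M)) (f.lTensor (AdicCompletion I M))
    ((AdicCompletion.map I (K.subtype.lTensor M)).restrictScalars R)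
    ((AdicCompletion.map I (f.lTensor M)).restrictScalars R)
    (adicCompletionTensor I M K) (adicCompletionTensor I M (Fin n → R))
    (adicCompletionTensor I M N)
    (LinearMap.ext (map_lTensor_adicCompletionTensor I M K.subtype))
    (LinearMap.ext (map_lTensor_adicCompletionTensor I M f))
    (lTensor_exact _ hexact hf) (hAR.map_exact (lTensor_exact M hexact hf) hmapf)
    (adicCompletionTensor_surjective I M) (adicCompletionTensor_pi_bijective I M (Fin n))
    (LinearMap.lTensor_surjective _ hf) (AdicCompletion.map_surjective I hmapf)

end Comparison

theorem stmt11_general {A : Type*} [CommRing A] [IsNoetherianRing A] (I : Ideal A)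
    (M : Type*) [AddCommGroup M] [Module A M] [Module.Flat A M] :
    Module.Flat A (AdicCompletion I M) := by
  refine Module.Flat.iff_lTensor_injective'.2 fun J ↦ ?_
  have hJ : Function.Injective (AdicCompletion.map I (J.subtype.lTensor M)) :=
    ((isArtinRees_of_finite I _).range_lTensor M).map_injective
      (Module.Flat.lTensor_preserves_injective_linearMap _ J.subtype_injective)
  refine Function.Injective.of_comp (f := adicCompletionTensor I M A) ?_
  have hnat : adicCompletionTensor I M A ∘ J.subtype.lTensor (AdicCompletion I M) =
      AdicCompletion.map I (J.subtype.lTensor M) ∘ adicCompletionTensor I M J :=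
    funext fun t ↦ (map_lTensor_adicCompletionTensor I M J.subtype t).symm
  rw [hnat]
  exact hJ.comp (adicCompletionTensor_bijective I M).1

/-- Over a noetherian commutative ring `A`, the `I`-adic completion of a flat `A`-module is
again flat. -/
theorem stmt11 {A : Type} [CommRing A] [IsNoetherianRing A] (I : Ideal A)
    (M : Type) [AddCommGroup M] [Module A M] [Module.Flat A M] :
    Module.Flat A (AdicCompletion I M) :=
  stmt11_general I M
end
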